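/- Let γ = (γ_j)_{j≥1} be non-increasing nonnegative weights with ∑_{j≥1} γ_j < ∞, and let δ > 0. Then there exists a constant C > 0 (depending only on γ and δ, independent of p and s) such that for every prime p and every s ∈ ℕ the Korobov point set P_{p,s} satisfies D*_γ(P_{p,s}) ≤ C·p^{−(1/2−δ)}. -/

import Mathlib

open Finset

/-- Local discrepancy of the point set `x` at the corner point `t`:
`Δ(t) = #{n : x_n ∈ [0,t)}/N − ∏_j t_j`. -/
noncomputable def localDisc {N s : ℕ} (x : Fin N → Fin s → ℝ) (t : Fin s → ℝ) : ℝ :=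
  ((univ.filter fun n => ∀ j, x n j < t j).card : ℝ) / N - ∏ j, t j

/-- `(z_u, 1)`: the vector `z` with all components whose index is not in `u`
replaced by `1`. -/
def projPoint {s : ℕ} (u : Finset (Fin s)) (z : Fin s → ℝ) : Fin s → ℝ :=
  fun j => if j ∈ u then z j else 1

/-- The weight `γ_u = ∏_{j ∈ u} γ_j` of a set of coordinates `u ⊆ {1,…,s}`;
coordinate `j : Fin s` carries weight `γ (j+1)` (weights are indexed from `1`). -/
noncomputable def weightOf {s : ℕ} (γ : ℕ → ℝ) (u : Finset (Fin s)) : ℝ :=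
  ∏ j ∈ u, γ (j.1 + 1)

/-- Weighted star-discrepancy
`D*_γ(x) = sup_{z ∈ [0,1]^s} max_{∅ ≠ u ⊆ [s]} γ_u |Δ(z_u,1)|`. -/
noncomputable def wStarDisc {N s : ℕ} (γ : ℕ → ℝ) (x : Fin N → Fin s → ℝ) : ℝ :=
  sSup {d : ℝ | ∃ z : Fin s → ℝ, (∀ j, z j ∈ Set.Icc (0:ℝ) 1) ∧
    ∃ u : Finset (Fin s), u.Nonempty ∧
      d = weightOf γ u * |localDisc x (projPoint u z)|}

/-- `N`-th minimal weighted star-discrepancy `disc_γ(N,s)`. -/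
noncomputable def wMinDisc (γ : ℕ → ℝ) (N s : ℕ) : ℝ :=
  sInf {d : ℝ | ∃ x : Fin N → Fin s → ℝ,
    (∀ n j, x n j ∈ Set.Ico (0:ℝ) 1) ∧ d = wStarDisc γ x}

/-- Korobov's `p`-set `P_{p,s}`: the points `x_n = ({n/p}, {n²/p}, …, {n^s/p})`
for `n = 0, 1, …, p−1`. -/
noncomputable def korobovP (p s : ℕ) : Fin p → Fin s → ℝ :=
  fun n j => Int.fract ((n.1 : ℝ) ^ (j.1 + 1) / p)

/-- Korobov's `p²`-set `Q_{p²,s}`: the points `x_n = ({n/p²}, {n²/p²}, …, {n^s/p²})`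
for `n = 0, 1, …, p²−1`. -/
noncomputable def korobovQ (p s : ℕ) : Fin (p ^ 2) → Fin s → ℝ :=
  fun n j => Int.fract ((n.1 : ℝ) ^ (j.1 + 1) / ((p : ℝ) ^ 2))

/-- The Hua–Wang multi-set `R_{p²,s}`: the `p²` points
`x_{a,k} = ({k/p}, {ak/p}, …, {a^{s−1}k/p})` for `a, k = 0, …, p−1`, counted with
multiplicity; here the index `n < p²` encodes `a = n / p` and `k = n % p`. -/
noncomputable def huaWangR (p s : ℕ) : Fin (p ^ 2) → Fin s → ℝ :=
  fun n j => Int.fract (((n.1 / p : ℕ) : ℝ) ^ j.1 * ((n.1 % p : ℕ) : ℝ) / p)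

/-!
Let `ψ` be a nontrivial additive character of `F = 𝔽_q` and `f` a polynomial over `F` whose degree
is nonzero in `F`. The function `g ↦ ψ (∑_{g(α) = 0} f(α))` on monic polynomials is multiplicative,
and adding `c X ^ (deg g - deg f)` to `g` changes the root sum by a nonzero multiple of `c`. Hence
the associated `L`-function is a polynomial of degree less than `deg f`, and comparing its
logarithmic derivative with its Euler product gives at most `deg f - 1` complex numbers `z` such
that the sum of `ψ ∘ Tr ∘ f` over `𝔽_{q^n}` is `-∑ z ^ n` for every `n`. Stepanov's method bounds
these sums by `O(q ^ (n / 2))` for even `n`, which forces `‖z‖ ≤ √q`; the case `n = 1` is Weil's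
bound `‖∑ ψ(f(x))‖ ≤ (deg f - 1) √q`.

By finite Fourier analysis, the local discrepancy of the projection of the Korobov set to the
coordinates in `u` is then at most `2 (max u) p ^ (-1/2) (2 + log p) ^ |u|`. Since `j γ_j` is
bounded, the factor `max u` is absorbed by the weight of the largest coordinate, and
`∏_j (1 + γ_j (2 + log p)) = O(p ^ ε)` for every `ε > 0` because `γ` is summable.
-/

section RootSum

open Polynomial
open scoped PowerSeries

variable {K : Type*} [Field K]

/-- The generating series `∑ₙ pₙ Xⁿ` of the power sums `pₙ` of the roots of `g`, computed from the
coefficients of `g` through the logarithmic derivative of the reversed polynomial. -/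
noncomputable def newtonSeries (g : K[X]) : K⟦X⟧ :=
  (PowerSeries.C (g.natDegree : K) * (g.reverse : K⟦X⟧) -
    PowerSeries.X * d⁄dX K (g.reverse : K⟦X⟧)) *
      (g.reverse : K⟦X⟧)⁻¹

lemma constantCoeff_coe_reverse_ne_zero {g : K[X]} (hg : g ≠ 0) :
    PowerSeries.constantCoeff (g.reverse : K⟦X⟧) ≠ 0 := by
  simpa using hg

lemma newtonSeries_eq_iff {g : K[X]} (hg : g ≠ 0) {u : K⟦X⟧} :
    newtonSeries g = u ↔
      u * (g.reverse : K⟦X⟧) =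
        PowerSeries.C (g.natDegree : K) * (g.reverse : K⟦X⟧) -
          PowerSeries.X * d⁄dX K (g.reverse : K⟦X⟧) := by
  rw [← PowerSeries.eq_mul_inv_iff_mul_eq (constantCoeff_coe_reverse_ne_zero hg), eq_comm,
    newtonSeries]

lemma constantCoeff_newtonSeries {g : K[X]} (hg : g ≠ 0) :
    PowerSeries.constantCoeff (newtonSeries g) = g.natDegree := by
  simp [newtonSeries, leadingCoeff_ne_zero.2 hg]

lemma newtonSeries_one : newtonSeries (1 : K[X]) = 0 := by
  have hrev : (1 : K[X]).reverse = 1 := reverse_C 1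
  simp [newtonSeries, hrev]

lemma newtonSeries_mul {g h : K[X]} (hg : g ≠ 0) (hh : h ≠ 0) :
    newtonSeries (g * h) = newtonSeries g + newtonSeries h := by
  have hG := (newtonSeries_eq_iff hg).1 rfl
  have hH := (newtonSeries_eq_iff hh).1 rfl
  rw [newtonSeries_eq_iff (mul_ne_zero hg hh), natDegree_mul hg hh, reverse_mul_of_domain,
    Polynomial.coe_mul, Derivation.leibniz, Nat.cast_add, map_add, smul_eq_mul, smul_eq_mul]
  linear_combination (h.reverse : K⟦X⟧) * hG + (g.reverse : K⟦X⟧) * hH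

lemma newtonSeries_X_sub_C (a : K) : newtonSeries (X - C a) = PowerSeries.mk fun n => a ^ n := by
  have hrev : (X - C a).reverse = 1 - C a * X := by
    rw [reverse, natDegree_X_sub_C, sub_eq_add_neg, ← C_neg, reflect_add, reflect_C, reflect_one_X,
      pow_one, C_neg]
    ring
  have hgeom : PowerSeries.mk (fun n => a ^ n) * (1 - PowerSeries.C a * PowerSeries.X) = 1 := by
    simpa [PowerSeries.rescale_mk] using
      congrArg (PowerSeries.rescale a) (PowerSeries.mk_one_mul_one_sub_eq_one K)
  rw [newtonSeries_eq_iff (X_sub_C_ne_zero a), hrev]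
  simp [hgeom, mul_comm PowerSeries.X]

lemma newtonSeries_map {L : Type*} [Field L] (φ : K →+* L) {g : K[X]} (hg : g ≠ 0) :
    newtonSeries (g.map φ) = PowerSeries.map φ (newtonSeries g) := by
  have hrev : ((g.map φ).reverse : L⟦X⟧) =
      PowerSeries.map φ (g.reverse : K⟦X⟧) := by
    rw [reverse, natDegree_map, reflect_map, polynomial_map_coe, reverse]
  rw [newtonSeries_eq_iff ((Polynomial.map_ne_zero_iff φ.injective).2 hg), hrev, ← map_mul,
    (newtonSeries_eq_iff hg).1 rfl]
  ext n
  cases n <;> simp [PowerSeries.coeff_succ_X_mul, PowerSeries.coeff_derivative]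

lemma newtonSeries_of_splits {g : K[X]} (hg : g.Monic) (hs : g.Splits) :
    newtonSeries g = PowerSeries.mk fun n => (g.roots.map (· ^ n)).sum := by
  have hprod (s : Multiset K) : newtonSeries (s.map fun a => X - C a).prod =
      PowerSeries.mk fun n => (s.map (· ^ n)).sum := by
    induction s using Multiset.induction with
    | empty => ext; simp [newtonSeries_one]
    | cons a s ih =>
      have hs0 := (monic_multiset_prod_of_monic s _ fun a _ => monic_X_sub_C a).ne_zero
      rw [Multiset.map_cons, Multiset.prod_cons, newtonSeries_mul (X_sub_C_ne_zero a) hs0,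
        newtonSeries_X_sub_C, ih]
      ext
      simp
  rw [← hprod, ← hs.eq_prod_roots_of_monic hg]

lemma monic_add_C_mul_X_pow {R : Type*} [CommRing R] [Nontrivial R] {g : R[X]} (hg : g.Monic)
    {k : ℕ} (hk : k < g.natDegree) (c : R) :
    (g + C c * X ^ k).Monic ∧ (g + C c * X ^ k).natDegree = g.natDegree := by
  have hlt : (C c * X ^ k).degree < g.degree := by
    rw [degree_eq_natDegree hg.ne_zero]
    exact (degree_C_mul_X_pow_le _ _).trans_lt (by exact_mod_cast hk)
  exact ⟨hg.add_of_left hlt, natDegree_add_eq_left_of_degree_lt hlt⟩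

lemma reverse_add_C_mul_X_pow {g : K[X]} (hg : g.Monic) {d : ℕ} (hd : 0 < d)
    (hdg : d ≤ g.natDegree) (c : K) :
    (g + C c * X ^ (g.natDegree - d)).reverse = g.reverse + C c * X ^ d := by
  rw [reverse, (monic_add_C_mul_X_pow hg (k := g.natDegree - d) (by omega) c).2, reflect_add,
    reflect_C_mul_X_pow, revAt_le (Nat.sub_le _ _), Nat.sub_sub_self hdg, reverse]

lemma X_mul_derivative_X_pow (d : ℕ) :
    PowerSeries.X * d⁄dX K (PowerSeries.X ^ d) =
      (d : K⟦X⟧) * PowerSeries.X ^ d := by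
  cases d with
  | zero => simp
  | succ k =>
    rw [Derivation.leibniz_pow, PowerSeries.derivative_X, Nat.add_sub_cancel, smul_eq_mul, mul_one,
      nsmul_eq_mul]
    ring

lemma newtonSeries_add_C_mul_X_pow {g : K[X]} (hg : g.Monic) {d : ℕ} (hd : 0 < d)
    (hdg : d ≤ g.natDegree) (c : K) :
    newtonSeries (g + C c * X ^ (g.natDegree - d)) = newtonSeries g - PowerSeries.X ^ d *
      (PowerSeries.C c * (PowerSeries.C (d - g.natDegree : K) + newtonSeries g) *
        ((g + C c * X ^ (g.natDegree - d)).reverse : K⟦X⟧)⁻¹) := by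
  obtain ⟨hh, hdeg⟩ := monic_add_C_mul_X_pow hg (k := g.natDegree - d) (by omega) c
  have hN := (newtonSeries_eq_iff hg.ne_zero).1 rfl
  rw [newtonSeries_eq_iff hh.ne_zero, sub_mul, mul_assoc (PowerSeries.X ^ d), mul_assoc _ _⁻¹,
    PowerSeries.inv_mul_cancel _ (constantCoeff_coe_reverse_ne_zero hh.ne_zero), mul_one,
    reverse_add_C_mul_X_pow hg hd hdg, hdeg]
  simp only [Polynomial.coe_add, Polynomial.coe_mul, Polynomial.coe_C, Polynomial.coe_pow,
    Polynomial.coe_X, map_add, map_sub, Derivation.leibniz, smul_eq_mul, PowerSeries.derivative_C,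
    map_natCast] at hN ⊢
  linear_combination hN + PowerSeries.C c * X_mul_derivative_X_pow (K := K) d

lemma coeff_newtonSeries_add_C_mul_X_pow {g : K[X]} (hg : g.Monic) {d : ℕ} (hd : 0 < d)
    (hdg : d ≤ g.natDegree) (c : K) {n : ℕ} (hn : n ≤ d) :
    PowerSeries.coeff n (newtonSeries (g + C c * X ^ (g.natDegree - d))) =
      PowerSeries.coeff n (newtonSeries g) - if n = d then c * d else 0 := by
  have hlead := (monic_add_C_mul_X_pow hg (k := g.natDegree - d) (by omega) c).1.leadingCoeff
  rw [newtonSeries_add_C_mul_X_pow hg hd hdg, map_sub, PowerSeries.coeff_X_pow_mul']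
  rcases hn.lt_or_eq with hlt | rfl
  · simp [hlt.ne, hlt.not_ge]
  · simp [constantCoeff_newtonSeries hg.ne_zero, hlead]

/-- The sum of the values of `f` over the roots of `g`, counted with multiplicity; it lies in the
base field even if the roots do not. -/
noncomputable def rootSum (f g : K[X]) : K :=
  f.sum fun n a => a * PowerSeries.coeff n (newtonSeries g)

lemma rootSum_one (f : K[X]) : rootSum f 1 = 0 := by
  simp [rootSum, newtonSeries_one, Polynomial.sum_def]

lemma rootSum_mul (f : K[X]) {g h : K[X]} (hg : g ≠ 0) (hh : h ≠ 0) :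
    rootSum f (g * h) = rootSum f g + rootSum f h := by
  simp only [rootSum, newtonSeries_mul hg hh, map_add, mul_add, Polynomial.sum_def,
    Finset.sum_add_distrib]

lemma rootSum_map {L : Type*} [Field L] (φ : K →+* L) (f : K[X]) {g : K[X]} (hg : g ≠ 0) :
    rootSum (f.map φ) (g.map φ) = φ (rootSum f g) := by
  simp [rootSum, newtonSeries_map φ hg, Polynomial.sum_def, map_sum,
    support_map_of_injective f φ.injective]

lemma rootSum_of_splits (f : K[X]) {g : K[X]} (hg : g.Monic) (hs : g.Splits) :
    rootSum f g = (g.roots.map fun a => f.eval a).sum := by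
  simp only [rootSum, newtonSeries_of_splits hg hs, PowerSeries.coeff_mk, Polynomial.sum_def,
    eval_eq_sum, ← Multiset.sum_map_mul_left, Multiset.sum_map_sum]

lemma rootSum_add_C_mul_X_pow {f g : K[X]} (hg : g.Monic) (hf : 0 < f.natDegree)
    (hfg : f.natDegree ≤ g.natDegree) (c : K) :
    rootSum f (g + C c * X ^ (g.natDegree - f.natDegree)) =
      rootSum f g - c * f.natDegree * f.leadingCoeff := by
  have hrange (g : K[X]) := sum_over_range f
    (f := fun n a => a * PowerSeries.coeff n (newtonSeries g)) fun n => zero_mul _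
  have hcoeff : ∀ n ∈ Finset.range (f.natDegree + 1), _ := fun n hn =>
    coeff_newtonSeries_add_C_mul_X_pow hg hf hfg c (Finset.mem_range_succ_iff.1 hn)
  simp only [rootSum, hrange]
  rw [Finset.sum_congr rfl fun n hn => by rw [hcoeff n hn]]
  simp [mul_sub, mul_comm]

end RootSum

section MonicPolynomials

open Polynomial

variable (F : Type*) [Field F] [Finite F]

lemma finite_setOf_monic_natDegree_eq (n : ℕ) : {g : F[X] | g.Monic ∧ g.natDegree = n}.Finite := by
  have : Finite (degreeLT F (n + 1)) := Finite.of_equiv _ (degreeLTEquiv F (n + 1)).toEquiv.symm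
  refine (Set.toFinite (degreeLT F (n + 1) : Set F[X])).subset fun g hg => ?_
  rw [SetLike.mem_coe, mem_degreeLT, degree_eq_natDegree hg.1.ne_zero, hg.2]
  exact_mod_cast n.lt_succ_self

/-- The finite set of monic polynomials of degree `n` over a finite field. -/
noncomputable def monicsOfDegree (n : ℕ) : Finset F[X] :=
  (finite_setOf_monic_natDegree_eq F n).toFinset

open Classical in
/-- The finite set of monic irreducible polynomials of degree `n` over a finite field. -/
noncomputable def irreduciblesOfDegree (n : ℕ) : Finset F[X] :=
  {P ∈ monicsOfDegree F n | Irreducible P}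

variable {F}

@[simp]
lemma mem_monicsOfDegree {n : ℕ} {g : F[X]} :
    g ∈ monicsOfDegree F n ↔ g.Monic ∧ g.natDegree = n := by
  simp [monicsOfDegree]

@[simp]
lemma mem_irreduciblesOfDegree {n : ℕ} {P : F[X]} :
    P ∈ irreduciblesOfDegree F n ↔ (P.Monic ∧ P.natDegree = n) ∧ Irreducible P := by
  simp [irreduciblesOfDegree]

end MonicPolynomials

section Factorization

open Polynomial UniqueFactorizationMonoid

variable {F : Type*} [Field F]

lemma sum_count_normalizedFactors_mul_natDegree [DecidableEq F] {g : F[X]} (hg : g.Monic) :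
    ∑ P ∈ (normalizedFactors g).toFinset, (normalizedFactors g).count P * P.natDegree =
      g.natDegree := by
  have hprod : (normalizedFactors g).prod = g := by
    rw [prod_normalizedFactors_eq hg.ne_zero, hg.normalize_eq_self]
  have hmonic : ∀ P ∈ normalizedFactors g, P.Monic := fun P hP =>
    ((Polynomial.mem_normalizedFactors_iff hg.ne_zero).1 hP).2.1
  conv_rhs => rw [← hprod, natDegree_multiset_prod_of_monic _ hmonic, Finset.sum_multiset_map_count]
  simp

lemma pow_dvd_iff_le_count_normalizedFactors [DecidableEq F] {g P : F[X]} (hg : g ≠ 0)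
    (hP : P.Monic) (hirr : Irreducible P) {k : ℕ} :
    P ^ k ∣ g ↔ k ≤ (normalizedFactors g).count P := by
  rw [pow_dvd_iff_le_emultiplicity, emultiplicity_eq_count_normalizedFactors hirr hg,
    hP.normalize_eq_self, Nat.cast_le]

lemma card_filter_dvd_div_le {e v m : ℕ} (he : 0 < e) (hv : v * e ≤ m) :
    #{j ∈ range (m + 1) | e ∈ j.divisors ∧ j / e ≤ v} = v := by
  have himage : {j ∈ range (m + 1) | e ∈ j.divisors ∧ j / e ≤ v} = (Icc 1 v).image (· * e) := by
    ext j
    simp only [mem_filter, mem_range, Nat.mem_divisors, mem_image, mem_Icc]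
    constructor
    · rintro ⟨-, ⟨⟨k, rfl⟩, h0⟩, hk⟩
      rw [Nat.mul_div_cancel_left _ he] at hk
      exact ⟨k, ⟨Nat.pos_of_ne_zero (right_ne_zero_of_mul h0), hk⟩, mul_comm _ _⟩
    · rintro ⟨k, ⟨hk1, hkv⟩, rfl⟩
      rw [Nat.mul_div_cancel _ he]
      exact ⟨Nat.lt_succ_of_le ((Nat.mul_le_mul_right e hkv).trans hv),
        ⟨dvd_mul_left _ _, (Nat.mul_pos hk1 he).ne'⟩, hkv⟩
  rw [himage, card_image_of_injective _ fun a b h => Nat.eq_of_mul_eq_mul_right he h]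
  simp

open Classical in
lemma sum_irreduciblesOfDegree_pow_dvd [Finite F] {g : F[X]} (hg : g.Monic) :
    ∑ j ∈ range (g.natDegree + 1), ∑ e ∈ j.divisors,
      ∑ P ∈ irreduciblesOfDegree F e, (if P ^ (j / e) ∣ g then e else 0) = g.natDegree := by
  set T := (normalizedFactors g).toFinset with T_def
  have hmemT {P : F[X]} : P ∈ T ↔ Irreducible P ∧ P.Monic ∧ P ∣ g := by
    rw [T_def, Multiset.mem_toFinset, Polynomial.mem_normalizedFactors_iff hg.ne_zero]
  have hfiber (j : ℕ) :
      ∑ e ∈ j.divisors, ∑ P ∈ irreduciblesOfDegree F e, (if P ^ (j / e) ∣ g then e else 0) =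
      ∑ P ∈ T with P.natDegree ∈ j.divisors ∧ j / P.natDegree ≤ (normalizedFactors g).count P,
        P.natDegree := by
    rw [← sum_fiberwise_of_maps_to (g := natDegree) (t := j.divisors) (by simp +contextual)]
    refine sum_congr rfl fun e he => ?_
    rw [← sum_filter]
    refine sum_congr ?_ (by simp +contextual)
    ext P
    have hje : j / e ≠ 0 := (Nat.div_pos (Nat.divisor_le he) (Nat.pos_of_mem_divisors he)).ne'
    simp only [mem_filter, mem_irreduciblesOfDegree, hmemT]
    constructor
    · rintro ⟨⟨⟨hP, rfl⟩, hirr⟩, hdvd⟩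
      exact ⟨⟨⟨hirr, hP, (dvd_pow_self P hje).trans hdvd⟩, he,
        (pow_dvd_iff_le_count_normalizedFactors hg.ne_zero hP hirr).1 hdvd⟩, rfl⟩
    · rintro ⟨⟨⟨hirr, hP, -⟩, -, hle⟩, rfl⟩
      exact ⟨⟨⟨hP, rfl⟩, hirr⟩,
        (pow_dvd_iff_le_count_normalizedFactors hg.ne_zero hP hirr).2 hle⟩
  have hcount {P : F[X]} (hP : P ∈ T) :
      (normalizedFactors g).count P * P.natDegree ≤ g.natDegree := by
    rw [← sum_count_normalizedFactors_mul_natDegree hg]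
    exact single_le_sum (f := fun P => (normalizedFactors g).count P * P.natDegree)
      (fun _ _ => Nat.zero_le _) hP
  rw [sum_congr rfl fun j _ => (hfiber j).trans (sum_filter _ _), sum_comm,
    ← sum_count_normalizedFactors_mul_natDegree hg]
  refine sum_congr rfl fun P hP => ?_
  rw [← sum_filter, sum_const, card_filter_dvd_div_le (hmemT.1 hP).1.natDegree_pos, smul_eq_mul]
  rw [sum_count_normalizedFactors_mul_natDegree hg]
  exact hcount hP

end Factorization

section LFunction

open Polynomial
open scoped PowerSeries

variable {F R : Type*} [Field F] [Finite F] [CommRing R]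

/-- The `L`-function `∑ χ(g) X ^ deg g`, the sum running over all monic polynomials `g`, of a
multiplicative character `χ` of the polynomial ring over a finite field. -/
noncomputable def lFunction (χ : F[X] →* R) : R⟦X⟧ :=
  PowerSeries.mk fun n => ∑ g ∈ monicsOfDegree F n, χ g

/-- The numerator `X L'/L` of the logarithmic derivative of the `L`-function `L` of `χ`: its `n`-th
coefficient is the sum of `deg P * χ(P ^ k)` over the prime powers `P ^ k` of degree `n`. -/
noncomputable def primePowerSeries (χ : F[X] →* R) : R⟦X⟧ :=
  PowerSeries.mk fun n =>
    ∑ e ∈ n.divisors, ∑ P ∈ irreduciblesOfDegree F e, (e : R) * χ P ^ (n / e)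

lemma coeff_lFunction (χ : F[X] →* R) (n : ℕ) :
    PowerSeries.coeff n (lFunction χ) = ∑ g ∈ monicsOfDegree F n, χ g :=
  PowerSeries.coeff_mk _ _

lemma constantCoeff_lFunction (χ : F[X] →* R) : PowerSeries.constantCoeff (lFunction χ) = 1 := by
  have h : monicsOfDegree F 0 = {1} := by
    ext g
    simpa using ⟨fun h => h.1.natDegree_eq_zero.1 h.2, by rintro rfl; simp⟩
  rw [← PowerSeries.coeff_zero_eq_constantCoeff_apply, coeff_lFunction, h, sum_singleton, map_one]

open Classical in
lemma sum_monicsOfDegree_of_dvd (χ : F[X] →* R) {h : F[X]} (hh : h.Monic) (n : ℕ) :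
    ∑ g ∈ monicsOfDegree F (h.natDegree + n) with h ∣ g, χ g =
      χ h * PowerSeries.coeff n (lFunction χ) := by
  have himage : {g ∈ monicsOfDegree F (h.natDegree + n) | h ∣ g} =
      (monicsOfDegree F n).image (h * ·) := by
    ext g
    simp only [mem_filter, mem_monicsOfDegree, mem_image]
    constructor
    · rintro ⟨⟨hg, hdeg⟩, k, rfl⟩
      have hk := hh.of_mul_monic_left hg
      rw [hh.natDegree_mul hk] at hdeg
      exact ⟨k, ⟨hk, by omega⟩, rfl⟩
    · rintro ⟨k, ⟨hk, rfl⟩, rfl⟩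
      exact ⟨⟨hh.mul hk, hh.natDegree_mul hk⟩, dvd_mul_right _ _⟩
  rw [himage, sum_image fun _ _ _ _ heq => mul_left_cancel₀ hh.ne_zero heq, coeff_lFunction,
    mul_sum]
  simp only [map_mul]

lemma X_mul_derivative_lFunction (χ : F[X] →* R) :
    PowerSeries.X * d⁄dX R (lFunction χ) = primePowerSeries χ * lFunction χ := by
  classical
  ext m
  have hlhs : PowerSeries.coeff m (PowerSeries.X * d⁄dX R (lFunction χ)) =
      ∑ g ∈ monicsOfDegree F m, (m : R) * χ g := by
    cases m <;> simp [PowerSeries.coeff_succ_X_mul, PowerSeries.coeff_derivative, coeff_lFunction,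
      mul_sum, mul_comm]
  have hdeg {g : F[X]} (hg : g ∈ monicsOfDegree F m) : (m : R) * χ g =
      ∑ j ∈ range (m + 1), ∑ e ∈ j.divisors, ∑ P ∈ irreduciblesOfDegree F e,
        if P ^ (j / e) ∣ g then (e : R) * χ g else 0 := by
    obtain ⟨hmonic, rfl⟩ := mem_monicsOfDegree.1 hg
    conv_lhs => rw [← sum_irreduciblesOfDegree_pow_dvd hmonic]
    simp [sum_mul]
  rw [hlhs, sum_congr rfl fun g => hdeg, sum_comm, PowerSeries.coeff_mul,
    Nat.sum_antidiagonal_eq_sum_range_succ_mk]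
  refine sum_congr rfl fun j hj => ?_
  rw [sum_comm, primePowerSeries, PowerSeries.coeff_mk, sum_mul]
  refine sum_congr rfl fun e he => ?_
  rw [sum_comm, sum_mul]
  refine sum_congr rfl fun P hP => ?_
  obtain ⟨⟨hmonic, rfl⟩, -⟩ := mem_irreduciblesOfDegree.1 hP
  have hnatDegree : (P ^ (j / P.natDegree)).natDegree + (m - j) = m := by
    rw [natDegree_pow, Nat.div_mul_cancel (Nat.dvd_of_mem_divisors he),
      Nat.add_sub_cancel' (mem_range_succ_iff.1 hj)]
  have hsum := sum_monicsOfDegree_of_dvd χ (hmonic.pow (j / P.natDegree)) (m - j)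
  rw [hnatDegree, map_pow] at hsum
  rw [← sum_filter, ← mul_sum, hsum, mul_assoc]

end LFunction

section TraceSums

open Polynomial IntermediateField

variable {F : Type*} [Field F] [Finite F]

lemma trace_aeval_gen {L : Type*} [Field L] [Algebra F L] [Finite L] (pb : PowerBasis F L)
    (f : F[X]) : Algebra.trace F L (aeval pb.gen f) = rootSum f (minpoly F pb.gen) := by
  classical
  let E := AlgebraicClosure F
  have hint : IsIntegral F pb.gen := .of_finite _ _
  have hnodup : ((minpoly F pb.gen).aroots E).Nodup :=
    nodup_roots ((separable_map _).2 (Algebra.IsSeparable.isSeparable F pb.gen))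
  apply (algebraMap F E).injective
  rw [trace_eq_sum_embeddings E, ← rootSum_map _ _ (minpoly.ne_zero hint),
    rootSum_of_splits _ ((minpoly.monic hint).map _) (IsAlgClosed.splits _),
    Fintype.sum_equiv pb.liftEquiv' _ (fun y => (f.map (algebraMap F E)).eval y.1)]
  · rw [Finset.sum_mem_multiset _ _ (fun a => (f.map (algebraMap F E)).eval a) fun _ => rfl,
      Finset.sum_eq_multiset_sum, Multiset.toFinset_val, hnodup.dedup]
  · intro σ
    rw [PowerBasis.liftEquiv'_apply_coe, eval_map_algebraMap, ← aeval_algHom_apply]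

variable {K : Type*} [Field K] [Algebra F K]

lemma trace_aeval [Finite K] (f : F[X]) (x : K) :
    Algebra.trace F K (aeval x f) =
      (Module.finrank F K / (minpoly F x).natDegree) • rootSum f (minpoly F x) := by
  have hint : IsIntegral F x := .of_finite _ _
  let pb := adjoin.powerBasis hint
  have hgen : algebraMap F⟮x⟯ K pb.gen = x := by simp [pb, adjoin.powerBasis_gen]
  have haeval : aeval x f = algebraMap F⟮x⟯ K (aeval pb.gen f) := by
    rw [← aeval_algebraMap_apply, hgen]
  have hminpoly : minpoly F pb.gen = minpoly F x := by
    rw [← minpoly.algebraMap_eq (algebraMap F⟮x⟯ K).injective, hgen]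
  have hfinrank : Module.finrank F⟮x⟯ K = Module.finrank F K / (minpoly F x).natDegree := by
    rw [← Module.finrank_mul_finrank F F⟮x⟯ K, adjoin.finrank hint,
      Nat.mul_div_cancel_left _ (minpoly.natDegree_pos hint)]
  rw [haeval, ← Algebra.trace_trace (S := F⟮x⟯), Algebra.trace_algebraMap,
    LinearMap.map_smul_of_tower, trace_aeval_gen, hminpoly, hfinrank]

lemma splits_map_of_natDegree_dvd_finrank [Finite K] {P : F[X]} (hP : Irreducible P)
    (hdvd : P.natDegree ∣ Module.finrank F K) : (P.map (algebraMap F K)).Splits := by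
  obtain ⟨p, _⟩ := CharP.exists K
  have : Fact p.Prime := ⟨CharP.char_is_prime K p⟩
  let _ : Algebra (ZMod p) K := ZMod.algebra K p
  have hsplits : (X ^ Nat.card K - X : K[X]).Splits := by
    simpa using FiniteField.splits_X_pow_nat_card_sub_X (K := K) p
  rw [hP.natDegree_dvd_iff_dvd_X_pow_card_pow_sub_X, ← Module.natCard_eq_pow_finrank] at hdvd
  refine hsplits.of_dvd (FiniteField.X_pow_card_sub_X_ne_zero _ Finite.one_lt_card) ?_
  simpa using Polynomial.map_dvd (algebraMap F K) hdvd

variable [Fintype K]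

lemma card_filter_minpoly_eq [DecidableEq F[X]] {P : F[X]} (hmonic : P.Monic) (hirr : Irreducible P)
    (hdvd : P.natDegree ∣ Module.finrank F K) : #{x : K | minpoly F x = P} = P.natDegree := by
  classical
  have hroots : (univ.filter fun x : K => minpoly F x = P) = (P.aroots K).toFinset := by
    ext x
    simp only [mem_filter, mem_univ, true_and, Multiset.mem_toFinset, mem_aroots]
    constructor
    · rintro rfl
      exact ⟨hmonic.ne_zero, minpoly.aeval _ _⟩
    · rintro ⟨-, hx⟩
      exact (minpoly.eq_of_irreducible_of_monic hirr hx hmonic).symm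
  rw [hroots, Multiset.toFinset_card_of_nodup
      (nodup_roots (PerfectField.separable_of_irreducible hirr).map),
    ← (splits_map_of_natDegree_dvd_finrank hirr hdvd).natDegree_eq_card_roots, natDegree_map]

lemma coeff_primePowerSeries_finrank {R : Type*} [CommRing R] (χ : F[X] →* R) :
    PowerSeries.coeff (Module.finrank F K) (primePowerSeries χ) =
      ∑ x : K, χ (minpoly F x) ^ (Module.finrank F K / (minpoly F x).natDegree) := by
  classical
  have hint (x : K) : IsIntegral F x := .of_finite _ _
  have hmaps (x : K) (_ : x ∈ univ) : (minpoly F x).natDegree ∈ (Module.finrank F K).divisors :=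
    Nat.mem_divisors.2 ⟨minpoly.degree_dvd (hint x), Module.finrank_pos.ne'⟩
  rw [primePowerSeries, PowerSeries.coeff_mk, ← sum_fiberwise_of_maps_to hmaps]
  refine sum_congr rfl fun e he => ?_
  rw [← sum_fiberwise_of_maps_to (g := minpoly F) (t := irreduciblesOfDegree F e) fun x hx =>
    mem_irreduciblesOfDegree.2
      ⟨⟨minpoly.monic (hint x), (mem_filter.1 hx).2⟩, minpoly.irreducible (hint x)⟩]
  refine sum_congr rfl fun P hP => ?_
  obtain ⟨⟨hmonic, rfl⟩, hirr⟩ := mem_irreduciblesOfDegree.1 hP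
  have hfilter : ({x | (minpoly F x).natDegree = P.natDegree ∧ minpoly F x = P} : Finset K) =
      ({x | minpoly F x = P} : Finset K) := by
    ext x
    simp +contextual
  rw [filter_filter, hfilter,
    sum_eq_card_nsmul (b := χ P ^ (Module.finrank F K / P.natDegree))
      fun x hx => by rw [(mem_filter.1 hx).2],
    card_filter_minpoly_eq hmonic hirr (Nat.dvd_of_mem_divisors he), nsmul_eq_mul]

end TraceSums

section RootSumCharacter

open Polynomial
open scoped PowerSeries

variable {F R : Type*} [Field F] [CommRing R]

open Classical in
/-- The multiplicative character `g ↦ ψ (∑ f(α))` of the polynomial ring, the inner sum running over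
the roots `α` of `g`, with value `0` at the zero polynomial. -/
noncomputable def rootSumChar (ψ : AddChar F R) (f : F[X]) : F[X] →* R where
  toFun g := if g = 0 then 0 else ψ (rootSum f g)
  map_one' := by simp [rootSum_one]
  map_mul' g h := by
    by_cases hg : g = 0
    · simp [hg]
    by_cases hh : h = 0
    · simp [hh]
    simp [hg, hh, rootSum_mul f hg hh, AddChar.map_add_eq_mul]

lemma rootSumChar_apply (ψ : AddChar F R) (f : F[X]) {g : F[X]} (hg : g ≠ 0) :
    rootSumChar ψ f g = ψ (rootSum f g) :=
  if_neg hg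

variable [Finite F]

lemma coeff_primePowerSeries_rootSumChar (ψ : AddChar F R) (f : F[X]) {K : Type*} [Field K]
    [Algebra F K] [Fintype K] :
    PowerSeries.coeff (Module.finrank F K) (primePowerSeries (rootSumChar ψ f)) =
      ∑ x : K, ψ (Algebra.trace F K (aeval x f)) := by
  rw [coeff_primePowerSeries_finrank]
  refine sum_congr rfl fun x _ => ?_
  rw [rootSumChar_apply ψ f (minpoly.ne_zero (.of_finite F x)), trace_aeval,
    AddChar.map_nsmul_eq_pow]

lemma coeff_lFunction_rootSumChar_eq_zero [IsDomain R] {ψ : AddChar F R} (hψ : ψ ≠ 1) {f : F[X]}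
    (hf : (f.natDegree : F) ≠ 0) {m : ℕ} (hm : f.natDegree ≤ m) :
    PowerSeries.coeff m (lFunction (rootSumChar ψ f)) = 0 := by
  have hd : 0 < f.natDegree := Nat.pos_of_ne_zero fun h => hf (by simp [h])
  have hlead : f.leadingCoeff ≠ 0 := leadingCoeff_ne_zero.2 (ne_zero_of_natDegree_gt hd)
  obtain ⟨y, hy⟩ := AddChar.ne_one_iff.1 hψ
  set c := -y / (f.natDegree * f.leadingCoeff) with hc
  have hshift {c : F} {g : F[X]} (hg : g ∈ monicsOfDegree F m) :
      g + C c * X ^ (m - f.natDegree) ∈ monicsOfDegree F m := by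
    obtain ⟨hmonic, rfl⟩ := mem_monicsOfDegree.1 hg
    exact mem_monicsOfDegree.2 (monic_add_C_mul_X_pow hmonic (by omega) c)
  have hperiodic : ∑ g ∈ monicsOfDegree F m, ψ y * rootSumChar ψ f g =
      ∑ g ∈ monicsOfDegree F m, rootSumChar ψ f g := by
    refine sum_nbij' (· + C c * X ^ (m - f.natDegree)) (· + C (-c) * X ^ (m - f.natDegree))
      (fun g => hshift) (fun g => hshift) (by simp) (by simp) fun g hg => ?_
    obtain ⟨hmonic, rfl⟩ := mem_monicsOfDegree.1 hg
    rw [rootSumChar_apply ψ f hmonic.ne_zero,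
      rootSumChar_apply ψ f (mem_monicsOfDegree.1 (hshift hg)).1.ne_zero,
      rootSum_add_C_mul_X_pow hmonic hd hm, ← AddChar.map_add_eq_mul]
    congr 1
    rw [hc]
    field_simp
    ring
  have hmul : (ψ y - 1) * ∑ g ∈ monicsOfDegree F m, rootSumChar ψ f g = 0 := by
    rw [sub_mul, one_mul, mul_sum, hperiodic, sub_self]
  rw [coeff_lFunction]
  exact (mul_eq_zero.1 hmul).resolve_left (sub_ne_zero.2 hy)

lemma exists_coeff_eq_neg_sum_pow {k : Type*} [Field k] [IsAlgClosed k] {L : k[X]} {n : ℕ}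
    (hL : L.natDegree ≤ n) (hL0 : L.coeff 0 = 1) {S : k⟦X⟧}
    (hS : PowerSeries.X * d⁄dX k (L : k⟦X⟧) = S * (L : k⟦X⟧)) :
    ∃ s : Multiset k, s.card = n ∧ ∀ j ≠ 0, PowerSeries.coeff j S = -(s.map (· ^ j)).sum := by
  set G := reflect n L with G_def
  have hcoeff : G.coeff n = 1 := by rw [coeff_reflect, revAt_le le_rfl, Nat.sub_self, hL0]
  have hle : G.natDegree ≤ n := natDegree_reflect_le.trans (max_le le_rfl hL)
  have hmonic : G.Monic := monic_of_natDegree_le_of_coeff_eq_one n hle hcoeff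
  have hdeg : G.natDegree = n :=
    natDegree_eq_of_le_of_coeff_ne_zero hle (by rw [hcoeff]; exact one_ne_zero)
  have hrev : G.reverse = L := by rw [reverse, hdeg, G_def, reflect_reflect]
  have hsplits := IsAlgClosed.splits G
  have hN := (newtonSeries_eq_iff hmonic.ne_zero).1 (newtonSeries_of_splits hmonic hsplits)
  rw [hrev, hdeg, hS, ← sub_mul] at hN
  have hL_ne : (L : k⟦X⟧) ≠ 0 := by
    rw [Ne, Polynomial.coe_eq_zero_iff]
    rintro rfl
    simp at hL0
  refine ⟨G.roots, by rw [← hsplits.natDegree_eq_card_roots, hdeg], fun j hj => ?_⟩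
  have hNj := congrArg (PowerSeries.coeff j) (mul_right_cancel₀ hL_ne hN)
  rw [PowerSeries.coeff_mk, map_sub, PowerSeries.coeff_C, if_neg hj, zero_sub] at hNj
  rw [hNj, neg_neg]

lemma exists_coeff_primePowerSeries_rootSumChar {k : Type*} [Field k] [IsAlgClosed k]
    {ψ : AddChar F k} (hψ : ψ ≠ 1) {f : F[X]} (hf : (f.natDegree : F) ≠ 0) :
    ∃ s : Multiset k, s.card = f.natDegree - 1 ∧
      ∀ j ≠ 0, PowerSeries.coeff j (primePowerSeries (rootSumChar ψ f)) = -(s.map (· ^ j)).sum := by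
  obtain ⟨n, hn⟩ : ∃ n, f.natDegree = n + 1 :=
    Nat.exists_eq_add_one_of_ne_zero fun h => hf (by simp [h])
  set L := (lFunction (rootSumChar ψ f)).trunc (n + 1) with L_def
  have hL : (L : k⟦X⟧) = lFunction (rootSumChar ψ f) := by
    ext m
    rw [coeff_coe, L_def, PowerSeries.coeff_trunc]
    split_ifs with h
    · rfl
    · exact (coeff_lFunction_rootSumChar_eq_zero hψ hf (by omega)).symm
  have hL0 : L.coeff 0 = 1 := by
    rw [← coeff_coe, hL, PowerSeries.coeff_zero_eq_constantCoeff_apply, constantCoeff_lFunction]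
  rw [hn, Nat.add_sub_cancel]
  refine exists_coeff_eq_neg_sum_pow (Nat.lt_succ_iff.1 (PowerSeries.natDegree_trunc_lt _ n)) hL0 ?_
  rw [← L_def, hL]
  exact X_mul_derivative_lFunction _

end RootSumCharacter

section Stepanov

open Polynomial

lemma linearIndependent_of_injective_natDegree {R ι : Type*} [Ring R] [NoZeroDivisors R]
    {v : ι → R[X]} (hv : ∀ i, v i ≠ 0) (hinj : Function.Injective fun i => (v i).natDegree) :
    LinearIndependent R v := by
  refine linearIndependent_iff'.2 fun s c hc i hi => ?_
  by_contra hci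
  have hdegree {j : ι} (hj : c j ≠ 0) : (c j • v j).degree = (v j).degree := by
    rw [smul_eq_C_mul, degree_C_mul hj]
  have hsup : (∑ j ∈ s, c j • v j).degree = s.sup fun j => (c j • v j).degree := by
    refine degree_sum_eq_of_disjoint _ _ fun j hj k hk hjk heq => hjk (hinj ?_)
    simp only [Function.comp_apply] at heq
    rw [hdegree (left_ne_zero_of_smul hj.2), hdegree (left_ne_zero_of_smul hk.2)] at heq
    exact natDegree_eq_of_degree_eq heq
  have hle := le_sup (f := fun j => (c j • v j).degree) hi
  rw [← hsup, hc, hdegree hci, degree_zero, le_bot_iff, degree_eq_bot] at hle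
  exact hv i hle

lemma exists_sum_smul_eq_zero_of_degree_lt {K ι : Type*} [Field K] [Fintype ι] {v : ι → K[X]}
    {D : ℕ} (hv : ∀ i, (v i).degree < D) (hD : D < Fintype.card ι) :
    ∃ c : ι → K, ∑ i, c i • v i = 0 ∧ ∃ i, c i ≠ 0 := by
  have hli : ¬ LinearIndependent K fun i => (⟨v i, mem_degreeLT.2 (hv i)⟩ : degreeLT K D) := by
    intro hli
    have : Module.Finite K (degreeLT K D) := .equiv (degreeLTEquiv K D).symm
    have hcard := hli.fintype_card_le_finrank
    rw [(degreeLTEquiv K D).finrank_eq, Module.finrank_fin_fun] at hcard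
    omega
  obtain ⟨c, hc, hne⟩ := Fintype.not_linearIndependent_iff.1 hli
  exact ⟨c, by simpa using congrArg (degreeLT K D).subtype hc, hne⟩

/- Stepanov's method. A relation `∑ cₜ Eₜ = 0` exists for dimension reasons. Its coefficients are
`p ^ n`-th powers `cₜ = eₜ ^ (p ^ n)`, so `∑ eₜ Vₜ` vanishes on `S`; it is nonzero because the
degrees of the `Vₜ` are distinct. -/
lemma card_le_of_eval_pow_eq_eval {K ι : Type*} [Field K] (p : ℕ) [ExpChar K p] [PerfectRing K p]
    [Fintype ι] {V E : ι → K[X]} {D M n : ℕ} (hV : ∀ t, V t ≠ 0)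
    (hinj : Function.Injective fun t => (V t).natDegree) (hVM : ∀ t, (V t).natDegree ≤ M)
    (hE : ∀ t, (E t).degree < D) (hD : D < Fintype.card ι) {S : Finset K}
    (hS : ∀ x ∈ S, ∀ t, (V t).eval x ^ p ^ n = (E t).eval x) : #S ≤ M := by
  obtain ⟨c, hc, t₀, ht₀⟩ := exists_sum_smul_eq_zero_of_degree_lt hE hD
  choose e he using fun t => (bijective_iterateFrobenius K p n).surjective (c t)
  simp only [iterateFrobenius_def] at he
  set H : K[X] := ∑ t, e t • V t with H_def
  have hH : H ≠ 0 := by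
    intro hH
    have hzero :=
      Fintype.linearIndependent_iff.1 (linearIndependent_of_injective_natDegree hV hinj) e hH t₀
    have hpos : p ^ n ≠ 0 := (expChar_pow_pos K p n).ne'
    exact ht₀ (by rw [← he, hzero, zero_pow hpos])
  have hroot {x : K} (hx : x ∈ S) : H.IsRoot x := by
    refine eq_zero_of_pow_eq_zero (n := p ^ n) ?_
    rw [H_def, eval_finsetSum, sum_pow_char_pow]
    simp only [eval_smul, smul_eq_mul, mul_pow, he, hS x hx]
    simpa [eval_finsetSum] using congrArg (eval x) hc
  classical
  calc #S ≤ #H.roots.toFinset :=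
        card_le_card fun x hx => Multiset.mem_toFinset.2 ((mem_roots hH).2 (hroot hx))
    _ ≤ H.natDegree := (Multiset.toFinset_card_le _).trans (card_roots' H)
    _ ≤ M := natDegree_sum_le_of_forall_le _ _ fun t _ => (natDegree_smul_le _ _).trans (hVM t)

lemma injective_add_mul_of_coprime {q d : ℕ} (hqd : q.Coprime d) (r B : ℕ) :
    Function.Injective
      fun t : Fin r × Fin B × Fin q => t.1.1 + r * (t.2.1.1 * q + t.2.2.1 * d) := by
  rintro ⟨a, i, j⟩ ⟨a', i', j'⟩ h
  dsimp only at h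
  have ha : a.1 = a'.1 := by
    simpa [Nat.add_mul_mod_self_left, Nat.mod_eq_of_lt a.2, Nat.mod_eq_of_lt a'.2] using
      congrArg (· % r) h
  have hij : i.1 * q + j.1 * d = i'.1 * q + j'.1 * d := by
    rw [ha] at h
    exact Nat.eq_of_mul_eq_mul_left a.pos (Nat.add_left_cancel h)
  have hj : j.1 = j'.1 := by
    have hmod : j.1 * d ≡ j'.1 * d [MOD q] := by
      simpa [Nat.ModEq, Nat.add_comm, Nat.add_mul_mod_self_right] using congrArg (· % q) hij
    exact (Nat.ModEq.cancel_right_of_coprime hqd hmod).eq_of_lt_of_lt j.2 j'.2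
  have hi : i.1 = i'.1 := by
    rw [hj] at hij
    exact Nat.eq_of_mul_eq_mul_right j.pos (Nat.add_right_cancel hij)
  exact Prod.ext (Fin.ext ha) (Prod.ext (Fin.ext hi) (Fin.ext hj))

lemma pow_mul_pow_pow_eq_of_pow_eq_self {M : Type*} [CommMonoid M] {x : M} {Q : ℕ}
    (hx : x ^ (Q * Q) = x) (y : M) (a i j : ℕ) :
    (x ^ (a + i * Q) * y ^ j) ^ Q = x ^ (a * Q + i) * (y ^ Q) ^ j := by
  rw [mul_pow, pow_right_comm y, ← pow_mul, add_mul, pow_add, mul_assoc i, mul_comm i,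
    pow_mul x _ i, hx, ← pow_add]

lemma natDegree_X_pow_mul_pow {R : Type*} [CommRing R] [IsDomain R] {g : R[X]} (hg : g ≠ 0)
    (a j : ℕ) : (X ^ a * g ^ j).natDegree = a + j * g.natDegree := by
  rw [natDegree_mul (pow_ne_zero _ X_ne_zero) (pow_ne_zero _ hg), natDegree_X_pow, natDegree_pow]

variable {K : Type*} [Field K]

lemma card_filter_eval_pow_eq_eval_le [Fintype K] [DecidableEq K] {q r d : ℕ}
    (hK : Fintype.card K = (q * r) ^ 2) (hqd : q.Coprime d) (hlt : r + d + 1 < q * r) {g h : K[X]}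
    (hg : g.natDegree = d * r) (hh : h.natDegree ≤ d * r) :
    #{x : K | g.eval x ^ (q * r) = h.eval x} ≤ r + (r + 2 * d + 1) * (q * r) := by
  obtain ⟨p, _⟩ := CharP.exists K
  obtain ⟨k, hp, hk⟩ := FiniteField.card K p
  have : Fact p.Prime := ⟨hp⟩
  obtain ⟨n, -, hn⟩ := (Nat.dvd_prime_pow hp).1 (hk ▸ hK ▸ dvd_pow_self (q * r) two_ne_zero)
  have hfrob (x : K) : x ^ (q * r * (q * r)) = x := by
    rw [← sq, ← hK, FiniteField.pow_card]
  have hg0 : g ≠ 0 := by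
    rintro rfl
    obtain rfl | rfl : d = 0 ∨ r = 0 := by simpa using hg.symm
    · rw [(Nat.coprime_zero_right q).1 hqd] at hlt
      omega
    · simp at hlt
  let V (t : Fin r × Fin (r + d + 1) × Fin q) : K[X] :=
    X ^ (t.1.1 + t.2.1.1 * (q * r)) * g ^ t.2.2.1
  let E (t : Fin r × Fin (r + d + 1) × Fin q) : K[X] :=
    X ^ (t.1.1 * (q * r) + t.2.1.1) * h ^ t.2.2.1
  have hV (t) : (V t).natDegree = t.1.1 + r * (t.2.1.1 * q + t.2.2.1 * d) := by
    rw [natDegree_X_pow_mul_pow hg0, hg]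
    ring
  refine card_le_of_eval_pow_eq_eval p (n := n) (V := V) (E := E)
    (D := r * (q * r) + (r + d + 1) + d * (q * r))
    (fun t => mul_ne_zero (pow_ne_zero _ X_ne_zero) (pow_ne_zero _ hg0)) ?_ (fun t => ?_)
    (fun t => ?_) ?_ fun x hx t => ?_
  · simpa only [hV] using injective_add_mul_of_coprime hqd r (r + d + 1)
  · rw [hV]
    calc t.1.1 + r * (t.2.1.1 * q + t.2.2.1 * d)
        ≤ r + r * ((r + d + 1) * q + q * d) := by gcongr <;> exact Fin.is_le'
      _ = _ := by ring
  · have hle : (E t).natDegree ≤ t.1.1 * (q * r) + t.2.1.1 + t.2.2.1 * (d * r) :=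
      natDegree_mul_le.trans
        (add_le_add (natDegree_X_pow_le _) (natDegree_pow_le_of_le t.2.2.1 hh))
    have ha : t.1.1 * (q * r) ≤ r * (q * r) := Nat.mul_le_mul_right _ t.1.2.le
    have := t.2.1.2
    have hj : t.2.2.1 * (d * r) ≤ q * (d * r) := Nat.mul_le_mul_right _ t.2.2.2.le
    have hcomm : q * (d * r) = d * (q * r) := Nat.mul_left_comm q d r
    exact degree_le_natDegree.trans_lt (by exact_mod_cast (by omega))
  · simp only [Fintype.card_prod, Fintype.card_fin]
    linarith
  · rw [← hn]
    simp only [V, E, eval_mul, eval_pow, eval_X]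
    rw [← (mem_filter.1 hx).2]
    exact pow_mul_pow_pow_eq_of_pow_eq_self (hfrob x) _ _ _ _

lemma natDegree_sum_pow_pow {R : Type*} [Ring R] [NoZeroDivisors R] {f : R[X]}
    (hf : 0 < f.natDegree) {q : ℕ} (hq : 1 < q) (n : ℕ) :
    (∑ i ∈ range (n + 1), f ^ q ^ i).natDegree = f.natDegree * q ^ n := by
  induction n with
  | zero => simp
  | succ n ih =>
    have hlt : f.natDegree * q ^ n < (f ^ q ^ (n + 1)).natDegree := by
      rw [natDegree_pow, mul_comm]
      gcongr
      exact n.lt_succ_self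
    rw [sum_range_succ, natDegree_add_eq_right_of_natDegree_lt (ih ▸ hlt), natDegree_pow, mul_comm]

variable {F : Type*} [Field F] [Finite F] [Algebra F K]

lemma sum_range_pow_card_pow [Finite K] {m : ℕ} (hK : Module.finrank F K = 2 * m) (y : K) :
    (∑ i ∈ range m, y ^ Nat.card F ^ i) ^ Nat.card F ^ m =
      algebraMap F K (Algebra.trace F K y) - ∑ i ∈ range m, y ^ Nat.card F ^ i := by
  have := Fintype.ofFinite F
  have hfrob (z : K) : z ^ Nat.card F ^ m = (FiniteField.frobeniusAlgHom F K ^ m) z := by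
    rw [AlgHom.coe_pow, FiniteField.coe_frobeniusAlgHom, pow_iterate, Nat.card_eq_fintype_card]
  rw [FiniteField.algebraMap_trace_eq_sum_pow, hK, two_mul, sum_range_add, add_sub_cancel_left,
    hfrob, map_sum]
  refine sum_congr rfl fun i _ => ?_
  rw [← hfrob, ← pow_mul, ← pow_add, add_comm]

lemma card_filter_trace_aeval_eq_le [Fintype K] [DecidableEq F] {μ : ℕ}
    (hK : Module.finrank F K = 2 * (μ + 1)) {f : F[X]} (hf : (f.natDegree : F) ≠ 0)
    (hμ : Nat.card F ^ μ + f.natDegree + 1 < Nat.card F ^ (μ + 1)) (b : F) :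
    #{x : K | Algebra.trace F K (aeval x f) = b} ≤
      Nat.card F ^ μ + (Nat.card F ^ μ + 2 * f.natDegree + 1) * Nat.card F ^ (μ + 1) := by
  classical
  have hpos : 0 < f.natDegree := Nat.pos_of_ne_zero fun h => hf (by simp [h])
  have hcoprime : (Nat.card F).Coprime f.natDegree := by
    have := Fintype.ofFinite F
    obtain ⟨p, _, n, hp, hn⟩ := FiniteField.card' F
    rw [Nat.card_eq_fintype_card, hn]
    exact (hp.coprime_iff_not_dvd.2 fun h => hf ((CharP.cast_eq_zero_iff F p _).2 h)).pow_left _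
  set g : K[X] := ∑ i ∈ range (μ + 1), f.map (algebraMap F K) ^ Nat.card F ^ i with g_def
  have hg : g.natDegree = f.natDegree * Nat.card F ^ μ := by
    rw [g_def, natDegree_sum_pow_pow (by rwa [natDegree_map]) Finite.one_lt_card, natDegree_map]
  have hgx (x : K) : g.eval x = ∑ i ∈ range (μ + 1), aeval x f ^ Nat.card F ^ i := by
    simp [g_def, eval_finsetSum, eval_map_algebraMap]
  have hcard : Fintype.card K = (Nat.card F * Nat.card F ^ μ) ^ 2 := by
    rw [← Nat.card_eq_fintype_card, Module.natCard_eq_pow_finrank (K := F), hK]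
    ring
  rw [pow_succ'] at hμ ⊢
  have hh : (C (algebraMap F K b) - g).natDegree ≤ f.natDegree * Nat.card F ^ μ :=
    (natDegree_sub_le _ _).trans (by simp [hg])
  refine (card_le_card fun x hx => ?_).trans
    (card_filter_eval_pow_eq_eval_le hcard hcoprime hμ hg hh)
  rw [mem_filter] at hx ⊢
  refine ⟨mem_univ x, ?_⟩
  rw [← pow_succ', eval_sub, eval_C, hgx, sum_range_pow_card_pow hK, hx.2]

end Stepanov

section PowerSums

open Polynomial Asymptotics Filter

lemma sum_coeff_mul_sum_pow_add {R : Type*} [CommSemiring R] (Q : R[X]) (s : Multiset R) (n : ℕ) :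
    ∑ k ∈ range (Q.natDegree + 1), Q.coeff k * (s.map (· ^ (n + k))).sum =
      (s.map fun z => z ^ n * Q.eval z).sum := by
  induction s using Multiset.induction with
  | empty => simp
  | cons z s ih =>
    simp only [Multiset.map_cons, Multiset.sum_cons, mul_add, sum_add_distrib, ih]
    congr 1
    rw [eval_eq_sum_range, mul_sum]
    exact sum_congr rfl fun k _ => by ring

/- A polynomial vanishing at the other elements of `s` isolates the powers of `z`, as a linear
combination of shifts of the power sums. -/
lemma norm_le_of_sum_pow_isBigO {𝕜 : Type*} [NormedField 𝕜] [CharZero 𝕜] {s : Multiset 𝕜} {r : ℝ}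
    (hr : 0 ≤ r) (hs : (fun n => (s.map (· ^ n)).sum) =O[atTop] (r ^ ·)) {z : 𝕜} (hz : z ∈ s) :
    ‖z‖ ≤ r := by
  classical
  set Q : 𝕜[X] := ∏ w ∈ s.toFinset.erase z, (X - C w) with Q_def
  have hQz : Q.eval z ≠ 0 := by
    rw [Q_def, eval_prod, prod_ne_zero_iff]
    intro w hw
    simpa [sub_ne_zero] using (ne_of_mem_erase hw).symm
  have hQ (w : 𝕜) (hne : w ≠ z) (hw : w ∈ s) : Q.eval w = 0 := by
    rw [Q_def, eval_prod]
    exact prod_eq_zero (mem_erase.2 ⟨hne, Multiset.mem_toFinset.2 hw⟩) (by simp)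
  have hcount : (s.count z : 𝕜) ≠ 0 := Nat.cast_ne_zero.2 (Multiset.count_ne_zero.2 hz)
  have hisolate (n : ℕ) : ∑ k ∈ range (Q.natDegree + 1), Q.coeff k * (s.map (· ^ (n + k))).sum =
      s.count z * Q.eval z * z ^ n := by
    rw [sum_coeff_mul_sum_pow_add,
      Multiset.sum_map_eq_nsmul_single z fun w hne hw => by rw [hQ w hne hw, mul_zero],
      nsmul_eq_mul]
    ring
  have hshift (k : ℕ) : (fun n => (s.map (· ^ (n + k))).sum) =O[atTop] (r ^ ·) := by
    refine (hs.comp_tendsto (tendsto_add_atTop_nat k)).trans ?_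
    simpa only [Function.comp_def, pow_add, mul_comm (r ^ k)] using
      isBigO_const_mul_self (r ^ k) (r ^ ·) atTop
  have hpow : (z ^ ·) =O[atTop] (r ^ ·) := by
    rw [← isBigO_const_mul_left_iff (mul_ne_zero hcount hQz)]
    simpa only [← hisolate, ← Finset.sum_fn] using
      IsBigO.sum fun k (_ : k ∈ range (Q.natDegree + 1)) => (hshift k).const_mul_left (Q.coeff k)
  by_contra! hlt
  have hlittle : (fun n => ‖z‖ ^ n) =o[atTop] fun n => ‖z‖ ^ n := by
    simpa only [norm_pow] using
      hpow.norm_left.trans_isLittleO (isLittleO_pow_pow_of_lt_left hr hlt)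
  exact isLittleO_irrefl (.of_forall fun n => (pow_pos (hr.trans_lt hlt) n).ne') hlittle

end PowerSums

section WeilBound

open Polynomial Asymptotics Filter

lemma norm_sum_addChar_comp_le {X G : Type*} [Fintype X] [AddCommGroup G] [Fintype G]
    [DecidableEq G] {ψ : AddChar G ℂ} (hψ : ψ ≠ 1) {τ : X → G} {T : ℝ}
    (hτ : ∀ b, (#{x | τ x = b} : ℝ) ≤ Fintype.card X / Fintype.card G + T) :
    ‖∑ x, ψ (τ x)‖ ≤ 2 * Fintype.card G * T := by
  set A : ℝ := Fintype.card X / Fintype.card G with A_def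
  have hG : (0 : ℝ) < Fintype.card G := Nat.cast_pos.2 Fintype.card_pos
  have hsum : ∑ b, ((#{x | τ x = b} : ℝ) - A) = 0 := by
    rw [sum_sub_distrib, ← Nat.cast_sum, ← card_eq_sum_card_fiberwise fun x _ => by simp, sum_const,
      card_univ, card_univ, nsmul_eq_mul, A_def, mul_div_cancel₀ _ hG.ne', sub_self]
  have hT : 0 ≤ T := by
    have hle : ∑ b, ((#{x | τ x = b} : ℝ) - A) ≤ ∑ _b : G, T :=
      sum_le_sum fun b _ => by linarith [hτ b]
    rw [hsum, sum_const, card_univ, nsmul_eq_mul] at hle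
    exact nonneg_of_mul_nonneg_right hle hG
  have hchar : ∑ x, ψ (τ x) = ∑ b, ((#{x | τ x = b} - A : ℝ) : ℂ) * ψ b := by
    push_cast
    simp only [sub_mul, sum_sub_distrib, ← mul_sum, AddChar.sum_eq_zero_of_ne_one hψ, mul_zero,
      sub_zero]
    rw [← sum_fiberwise univ τ]
    refine sum_congr rfl fun b _ => ?_
    rw [sum_eq_card_nsmul fun x hx => congrArg ψ (mem_filter.1 hx).2, nsmul_eq_mul]
  calc ‖∑ x, ψ (τ x)‖ ≤ ∑ b, (2 * T - ((#{x | τ x = b} : ℝ) - A)) := by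
        rw [hchar]
        refine norm_sum_le_of_le _ fun b _ => ?_
        rw [norm_mul, AddChar.norm_apply, mul_one, Complex.norm_real, Real.norm_eq_abs, abs_le]
        constructor <;> linarith [hτ b]
    _ = 2 * Fintype.card G * T := by
        rw [sum_sub_distrib, hsum, sum_const, card_univ, nsmul_eq_mul]
        ring

variable {F : Type*} [Field F] [Finite F]

lemma norm_sum_addChar_trace_aeval_le {K : Type*} [Field K] [Algebra F K] [Fintype K] {μ : ℕ}
    (hK : Module.finrank F K = 2 * (μ + 1)) {ψ : AddChar F ℂ} (hψ : ψ ≠ 1) {f : F[X]}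
    (hf : (f.natDegree : F) ≠ 0) (hμ : Nat.card F ^ μ + f.natDegree + 1 < Nat.card F ^ (μ + 1)) :
    ‖∑ x : K, ψ (Algebra.trace F K (aeval x f))‖ ≤
      2 * Nat.card F * (2 * f.natDegree + 2) * (Nat.card F : ℝ) ^ (μ + 1) := by
  classical
  have := Fintype.ofFinite F
  have hq : (1 : ℝ) ≤ Nat.card F := by exact_mod_cast Nat.card_pos
  have hcard : (Fintype.card K : ℝ) / Fintype.card F =
      (Nat.card F : ℝ) ^ μ * (Nat.card F : ℝ) ^ (μ + 1) := by
    rw [← Nat.card_eq_fintype_card, Module.natCard_eq_pow_finrank (K := F), hK,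
      ← Nat.card_eq_fintype_card]
    field_simp
    push_cast
    ring
  have hfiber (b : F) : (#{x : K | Algebra.trace F K (aeval x f) = b} : ℝ) ≤
      Fintype.card K / Fintype.card F + (2 * f.natDegree + 2) * (Nat.card F : ℝ) ^ (μ + 1) := by
    have hle : (#{x : K | Algebra.trace F K (aeval x f) = b} : ℝ) ≤ (Nat.card F : ℝ) ^ μ +
        ((Nat.card F : ℝ) ^ μ + 2 * f.natDegree + 1) * (Nat.card F : ℝ) ^ (μ + 1) := by
      exact_mod_cast card_filter_trace_aeval_eq_le hK hf hμ b
    rw [hcard]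
    linarith [pow_le_pow_right₀ hq (Nat.le_add_right μ 1)]
  convert norm_sum_addChar_comp_le hψ hfiber using 1
  rw [Nat.card_eq_fintype_card]
  ring

lemma norm_coeff_primePowerSeries_rootSumChar_le {ψ : AddChar F ℂ} (hψ : ψ ≠ 1) {f : F[X]}
    (hf : (f.natDegree : F) ≠ 0) {n : ℕ} (hn : f.natDegree + 2 < n) :
    ‖PowerSeries.coeff (2 * n) (primePowerSeries (rootSumChar ψ f))‖ ≤
      2 * Nat.card F * (2 * f.natDegree + 2) * (Nat.card F : ℝ) ^ n := by
  obtain ⟨μ, rfl⟩ : ∃ μ, n = μ + 1 := Nat.exists_eq_add_one_of_ne_zero (by omega)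
  obtain ⟨p, _⟩ := CharP.exists F
  have : Fact p.Prime := ⟨CharP.char_is_prime F p⟩
  have : NeZero (2 * (μ + 1)) := ⟨by omega⟩
  let K := FiniteField.Extension F p (2 * (μ + 1))
  have hK : Module.finrank F K = 2 * (μ + 1) := FiniteField.finrank_extension F p _
  have := Fintype.ofFinite K
  have hμ : Nat.card F ^ μ + f.natDegree + 1 < Nat.card F ^ (μ + 1) := by
    have hq : 2 ≤ Nat.card F := Finite.one_lt_card
    have hle : Nat.card F ^ μ * 2 ≤ Nat.card F ^ (μ + 1) := Nat.mul_le_mul_left _ hq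
    have hlt : μ < Nat.card F ^ μ := Nat.lt_pow_self hq
    omega
  rw [← hK, coeff_primePowerSeries_rootSumChar]
  exact norm_sum_addChar_trace_aeval_le hK hψ hf hμ

theorem norm_sum_addChar_eval_le [Fintype F] {ψ : AddChar F ℂ} (hψ : ψ ≠ 1) {f : F[X]}
    (hf : (f.natDegree : F) ≠ 0) :
    ‖∑ x, ψ (f.eval x)‖ ≤ (f.natDegree - 1 : ℕ) * √(Fintype.card F) := by
  obtain ⟨s, hs, hcoeff⟩ := exists_coeff_primePowerSeries_rootSumChar hψ hf
  have hgrowth : (fun n => ((s.map (· ^ 2)).map (· ^ n)).sum) =O[atTop]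
      fun n => (Fintype.card F : ℝ) ^ n := by
    refine .of_bound (2 * Nat.card F * (2 * f.natDegree + 2)) ?_
    filter_upwards [eventually_gt_atTop (f.natDegree + 2)] with n hn
    have hle := norm_coeff_primePowerSeries_rootSumChar_le hψ hf hn
    rw [hcoeff (2 * n) (by omega), norm_neg, Nat.card_eq_fintype_card] at hle
    simpa [Multiset.map_map, ← pow_mul] using hle
  have hnorm (z : ℂ) (hz : z ∈ s) : ‖z‖ ≤ √(Fintype.card F) := by
    have hsq := norm_le_of_sum_pow_isBigO (Nat.cast_nonneg _) hgrowth (Multiset.mem_map_of_mem _ hz)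
    rw [norm_pow] at hsq
    exact Real.le_sqrt_of_sq_le hsq
  have hsum : ∑ x, ψ (f.eval x) = -s.sum := by
    have hone := coeff_primePowerSeries_rootSumChar ψ f (K := F)
    rw [Module.finrank_self, hcoeff 1 one_ne_zero] at hone
    simpa using hone.symm
  calc ‖∑ x, ψ (f.eval x)‖ = ‖s.sum‖ := by rw [hsum, norm_neg]
    _ ≤ (s.map (‖·‖)).sum := norm_multiset_sum_le s
    _ ≤ (s.map (‖·‖)).card • √(Fintype.card F) :=
        Multiset.sum_le_card_nsmul _ _ (by simpa using hnorm)
    _ = (f.natDegree - 1 : ℕ) * √(Fintype.card F) := by rw [Multiset.card_map, hs, nsmul_eq_mul]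

end WeilBound

section FiniteFourier

open ZMod
open scoped Real

variable {N : ℕ} [NeZero N]

lemma two_mul_mul_one_sub_le_sin {t : ℝ} (h0 : 0 ≤ t) (h1 : t ≤ 1) :
    2 * (t * (1 - t)) ≤ Real.sin (π * t) := by
  wlog ht : t ≤ 1 / 2 generalizing t
  · rw [← Real.sin_pi_sub, show π - π * t = π * (1 - t) by ring]
    convert this (t := 1 - t) (by linarith) (by linarith) (by linarith) using 1
    ring
  · have hsin := Real.mul_le_sin (x := π * t) (by positivity) (by nlinarith [Real.pi_pos])
    rw [← mul_assoc, div_mul_cancel₀ _ Real.pi_ne_zero] at hsin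
    nlinarith

lemma norm_stdAddChar_sub_one (h : ZMod N) :
    ‖stdAddChar h - 1‖ = 2 * Real.sin (π * (h.val / N)) := by
  have hN : (0 : ℝ) < N := Nat.cast_pos.2 (NeZero.pos N)
  have hle : (h.val / N : ℝ) ≤ 1 := (div_le_one hN).2 (by exact_mod_cast h.val_lt.le)
  have hsin : 0 ≤ Real.sin (π * (h.val / N)) :=
    Real.sin_nonneg_of_nonneg_of_le_pi (by positivity)
      (mul_le_of_le_one_right Real.pi_pos.le hle)
  rw [← abs_of_nonneg (mul_nonneg zero_le_two hsin), ← Real.norm_eq_abs,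
    show π * (h.val / N) = 2 * π * h.val / N / 2 by ring, ← Complex.norm_exp_I_mul_ofReal_sub_one,
    stdAddChar_apply, toCircle_apply]
  congr 3
  push_cast
  ring

lemma norm_sum_range_stdAddChar_pow_le {h : ZMod N} (hh : h ≠ 0) (m : ℕ) :
    ‖∑ r ∈ range m, stdAddChar h ^ r‖ ≤ N / 2 * ((h.val : ℝ)⁻¹ + (N - h.val : ℝ)⁻¹) := by
  have hval : (0 : ℝ) < h.val := Nat.cast_pos.2 (Nat.pos_of_ne_zero ((val_ne_zero h).2 hh))
  have hval' : (0 : ℝ) < N - h.val := sub_pos.2 (by exact_mod_cast h.val_lt)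
  have hN : (0 : ℝ) < N := Nat.cast_pos.2 (NeZero.pos N)
  have hlower : 4 * (h.val * (N - h.val)) / N ^ 2 ≤ ‖stdAddChar h - 1‖ := by
    rw [norm_stdAddChar_sub_one]
    calc 4 * (h.val * (N - h.val)) / (N : ℝ) ^ 2
        = 2 * (2 * (h.val / N * (1 - h.val / N))) := by field_simp; ring
      _ ≤ 2 * Real.sin (π * (h.val / N)) := by
        gcongr
        exact two_mul_mul_one_sub_le_sin (by positivity) ((div_le_one hN).2 (by linarith))
  have hgeom : ‖∑ r ∈ range m, stdAddChar h ^ r‖ * ‖stdAddChar h - 1‖ ≤ 2 := by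
    rw [← norm_mul, geom_sum_mul]
    refine (norm_sub_le _ _).trans ?_
    rw [norm_pow, AddChar.norm_apply]
    norm_num
  calc ‖∑ r ∈ range m, stdAddChar h ^ r‖
      ≤ 2 / (4 * (h.val * (N - h.val)) / N ^ 2) := by
        rw [le_div_iff₀ (by positivity)]
        exact (mul_le_mul_of_nonneg_left hlower (norm_nonneg _)).trans hgeom
    _ = N / 2 * ((h.val : ℝ)⁻¹ + (N - h.val : ℝ)⁻¹) := by
        field_simp
        ring

lemma sum_univ_zmod_val {M : Type*} [AddCommMonoid M] (g : ℕ → M) :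
    ∑ h : ZMod N, g h.val = ∑ k ∈ range N, g k :=
  sum_nbij' val (fun k => (k : ZMod N)) (by simp [val_lt]) (by simp) (by simp)
    (fun k hk => val_cast_of_lt (mem_range.1 hk)) (by simp)

lemma sum_range_inv_add_inv (n : ℕ) :
    ∑ k ∈ range n, (((k + 1 : ℕ) : ℝ)⁻¹ + ((n + 1 : ℕ) - (k + 1 : ℕ) : ℝ)⁻¹) =
      2 * harmonic n := by
  have hreflect : ∑ k ∈ range n, ((n + 1 : ℕ) - (k + 1 : ℕ) : ℝ)⁻¹ =
      ∑ k ∈ range n, ((k + 1 : ℕ) : ℝ)⁻¹ := by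
    rw [← sum_range_reflect]
    refine sum_congr rfl fun k hk => ?_
    rw [← Nat.cast_sub (by omega)]
    have := mem_range.1 hk
    congr 2
    omega
  rw [sum_add_distrib, hreflect, harmonic]
  push_cast
  ring

variable (N) in
/-- The indicator function of the residues `0, …, m - 1` modulo `N`. -/
noncomputable def initialIndicator (m : ℕ) : ZMod N → ℂ := fun y => if y.val < m then 1 else 0

lemma sum_initialIndicator_mul {m : ℕ} (hm : m ≤ N) (g : ZMod N → ℂ) :
    ∑ y, initialIndicator N m y * g y = ∑ r ∈ range m, g r := by
  simp only [initialIndicator, ite_mul, one_mul, zero_mul, ← sum_filter]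
  refine sum_nbij' val (fun r => (r : ZMod N)) (by simp) (fun r hr => ?_) (by simp)
    (fun r hr => val_cast_of_lt ((mem_range.1 hr).trans_le hm)) (by simp)
  rw [mem_filter, val_cast_of_lt ((mem_range.1 hr).trans_le hm)]
  exact ⟨mem_univ _, mem_range.1 hr⟩

lemma dft_initialIndicator_neg {m : ℕ} (hm : m ≤ N) (h : ZMod N) :
    dft (initialIndicator N m) (-h) = ∑ r ∈ range m, stdAddChar h ^ r := by
  simp only [dft_apply, smul_eq_mul, mul_comm (stdAddChar _), sum_initialIndicator_mul hm]
  refine sum_congr rfl fun r _ => ?_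
  rw [mul_neg, neg_neg, ← nsmul_eq_mul, AddChar.map_nsmul_eq_pow]

lemma sum_norm_dft_initialIndicator_le {m : ℕ} (hm : m ≤ N) :
    ∑ h, ‖dft (initialIndicator N m) h‖ ≤ N * (2 + Real.log N) := by
  let g (k : ℕ) : ℝ := if k = 0 then N else N / 2 * ((k : ℝ)⁻¹ + (N - k : ℝ)⁻¹)
  have hg (h : ZMod N) : ‖dft (initialIndicator N m) (-h)‖ ≤ g h.val := by
    rw [dft_initialIndicator_neg hm]
    by_cases hh : h = 0
    · simpa [g, hh] using hm
    · simpa [g, hh] using norm_sum_range_stdAddChar_pow_le hh m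
  obtain ⟨n, rfl⟩ := Nat.exists_eq_add_one_of_ne_zero (NeZero.ne N)
  have hlog : (harmonic n : ℝ) ≤ 1 + Real.log (n + 1 : ℕ) := by
    obtain rfl | hn := n.eq_zero_or_pos
    · simp
    · refine (harmonic_le_one_add_log n).trans ?_
      gcongr
      exact n.le_succ
  calc ∑ h, ‖dft (initialIndicator (n + 1) m) h‖
      = ∑ h, ‖dft (initialIndicator (n + 1) m) (-h)‖ :=
        (Equiv.sum_comp (Equiv.neg _) fun h => ‖dft (initialIndicator (n + 1) m) h‖).symm
    _ ≤ ∑ k ∈ range (n + 1), g k := by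
        rw [← sum_univ_zmod_val]
        exact sum_le_sum fun h _ => hg h
    _ = (n + 1 : ℕ) * (1 + harmonic n) := by
        rw [sum_range_succ']
        simp only [g, Nat.add_one_ne_zero, if_false, if_true, ← mul_sum, sum_range_inv_add_inv]
        ring
    _ ≤ (n + 1 : ℕ) * (2 + Real.log (n + 1 : ℕ)) :=
        mul_le_mul_of_nonneg_left (by linarith) (Nat.cast_nonneg _)

variable {Ω ι : Type*} [Fintype Ω] [Fintype ι]

lemma map_sum_eq_prod_addChar {A M : Type*} [AddCommMonoid A] [CommMonoid M] (ψ : AddChar A M)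
    (a : ι → A) : ψ (∑ i, a i) = ∏ i, ψ (a i) :=
  map_prod ψ.toMonoidHom (fun i => Multiplicative.ofAdd (a i)) univ

lemma prod_eq_sum_prod_dft [DecidableEq ι] (Φ : ι → ZMod N → ℂ) (y : ι → ZMod N) :
    ∏ i, Φ i (y i) =
      ∑ h : ι → ZMod N, (∏ i, (N : ℂ)⁻¹ * dft (Φ i) (h i)) * stdAddChar (∑ i, h i * y i) := by
  have hinv (i : ι) : Φ i (y i) = ∑ h, (N : ℂ)⁻¹ * dft (Φ i) h * stdAddChar (h * y i) := by
    rw [← dft.symm_apply_apply (Φ i), invDFT_apply, LinearEquiv.apply_symm_apply, smul_eq_mul,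
      mul_sum]
    exact sum_congr rfl fun h _ => by rw [smul_eq_mul]; ring
  simp only [hinv, prod_univ_sum, Fintype.piFinset_univ, prod_mul_distrib, map_sum_eq_prod_addChar]

lemma norm_sum_prod_sub_le (Φ : ι → ZMod N → ℂ) {y : Ω → ι → ZMod N} {B : ℝ} (hB : 0 ≤ B)
    (hy : ∀ h : ι → ZMod N, h ≠ 0 → ‖∑ ω, stdAddChar (∑ i, h i * y ω i)‖ ≤ B) :
    ‖∑ ω, ∏ i, Φ i (y ω i) - Fintype.card Ω * ∏ i, (N : ℂ)⁻¹ * ∑ x, Φ i x‖ ≤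
      B * ∏ i, (N : ℝ)⁻¹ * ∑ h, ‖dft (Φ i) h‖ := by
  classical
  let c (h : ι → ZMod N) : ℂ := ∏ i, (N : ℂ)⁻¹ * dft (Φ i) (h i)
  have hexpand : ∑ ω, ∏ i, Φ i (y ω i) = ∑ h, c h * ∑ ω, stdAddChar (∑ i, h i * y ω i) := by
    simp only [prod_eq_sum_prod_dft, c, mul_sum]
    exact sum_comm
  have hzero : c 0 * ∑ ω, stdAddChar (∑ i, (0 : ι → ZMod N) i * y ω i) =
      Fintype.card Ω * ∏ i, (N : ℂ)⁻¹ * ∑ x, Φ i x := by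
    simp [c, dft_apply_zero, mul_comm]
  rw [hexpand, ← hzero, ← sum_erase_eq_sub (mem_univ 0)]
  calc ‖∑ h ∈ univ.erase 0, c h * ∑ ω, stdAddChar (∑ i, h i * y ω i)‖
      ≤ ∑ h ∈ univ.erase 0, B * ‖c h‖ := by
        refine norm_sum_le_of_le _ fun h hh => ?_
        rw [norm_mul, mul_comm]
        gcongr
        exact hy h (ne_of_mem_erase hh)
    _ ≤ ∑ h, B * ‖c h‖ :=
        sum_le_sum_of_subset_of_nonneg (subset_univ _) fun _ _ _ => by positivity
    _ = B * ∏ i, (N : ℝ)⁻¹ * ∑ h, ‖dft (Φ i) h‖ := by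
        simp [← mul_sum, c, norm_prod, prod_mul_distrib, prod_univ_sum]

lemma abs_card_filter_val_lt_sub_le {y : Ω → ι → ZMod N} {B : ℝ} (hB : 0 ≤ B)
    (hy : ∀ h : ι → ZMod N, h ≠ 0 → ‖∑ ω, stdAddChar (∑ i, h i * y ω i)‖ ≤ B)
    {m : ι → ℕ} (hm : ∀ i, m i ≤ N) :
    |(#{ω | ∀ i, (y ω i).val < m i} : ℝ) - Fintype.card Ω * ∏ i, (m i : ℝ) / N| ≤
      B * (2 + Real.log N) ^ Fintype.card ι := by
  have hN : (0 : ℝ) < N := Nat.cast_pos.2 (NeZero.pos N)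
  have hcard : (#{ω | ∀ i, (y ω i).val < m i} : ℂ) =
      ∑ ω, ∏ i, initialIndicator N (m i) (y ω i) := by
    simp [initialIndicator, prod_ite_zero]
  have hmean (i : ι) : (N : ℂ)⁻¹ * ∑ x, initialIndicator N (m i) x = m i / N := by
    rw [show ∑ x, initialIndicator N (m i) x = m i by
      simpa using sum_initialIndicator_mul (hm i) fun _ => 1]
    ring
  calc |(#{ω | ∀ i, (y ω i).val < m i} : ℝ) - Fintype.card Ω * ∏ i, (m i : ℝ) / N|
      = ‖∑ ω, ∏ i, initialIndicator N (m i) (y ω i) -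
          Fintype.card Ω * ∏ i, (N : ℂ)⁻¹ * ∑ x, initialIndicator N (m i) x‖ := by
        rw [← hcard, ← Real.norm_eq_abs, ← Complex.norm_real]
        simp only [hmean]
        push_cast
        rfl
    _ ≤ B * ∏ i, (N : ℝ)⁻¹ * ∑ h, ‖dft (initialIndicator N (m i)) h‖ :=
        norm_sum_prod_sub_le _ hB hy
    _ ≤ B * ∏ _i : ι, (2 + Real.log N) := by
        gcongr with i
        rw [inv_mul_le_iff₀ hN]
        exact sum_norm_dft_initialIndicator_le (hm i)
    _ = B * (2 + Real.log N) ^ Fintype.card ι := by rw [prod_const, card_univ]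

end FiniteFourier

section Monomials

open Polynomial

variable {F ι : Type*} [Field F] [Fintype F] [Fintype ι]

lemma norm_sum_addChar_sum_mul_pow_le {ψ : AddChar F ℂ} (hψ : ψ ≠ 1) {e : ι → ℕ}
    (he : Function.Injective e) (he0 : ∀ i, (e i : F) ≠ 0) {M : ℕ} (heM : ∀ i, e i ≤ M)
    {a : ι → F} (ha : a ≠ 0) : ‖∑ x, ψ (∑ i, a i * x ^ e i)‖ ≤ M * √(Fintype.card F) := by
  set f : F[X] := ∑ i, C (a i) * X ^ e i with f_def
  have hcoeff (i : ι) : f.coeff (e i) = a i := by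
    rw [f_def, finsetSum_coeff, sum_eq_single i (fun j _ hj => ?_) (by simp)]
    · simp
    · rw [coeff_C_mul_X_pow, if_neg fun h => hj (he h).symm]
  have hf : f ≠ 0 := by
    obtain ⟨i, hi⟩ := Function.ne_iff.1 ha
    rintro h
    exact hi (by rw [← hcoeff, h, coeff_zero, Pi.zero_apply])
  obtain ⟨i, hi⟩ : ∃ i, e i = f.natDegree := by
    by_contra! hne
    refine leadingCoeff_ne_zero.2 hf ?_
    rw [leadingCoeff, f_def, finsetSum_coeff]
    exact sum_eq_zero fun i _ => by rw [coeff_C_mul_X_pow, if_neg (hne i).symm]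
  have heval (x : F) : f.eval x = ∑ i, a i * x ^ e i := by
    simp [f_def, eval_finsetSum]
  calc ‖∑ x, ψ (∑ i, a i * x ^ e i)‖ ≤ (f.natDegree - 1 : ℕ) * √(Fintype.card F) := by
        simp only [← heval]
        exact norm_sum_addChar_eval_le hψ (hi ▸ he0 i)
    _ ≤ M * √(Fintype.card F) := by
        gcongr
        exact (Nat.sub_le _ _).trans (hi ▸ heM i)

end Monomials

section KorobovDiscrepancy

lemma norm_prod_sub_prod_le {R ι : Type*} [NormedCommRing R] [NormOneClass R] (s : Finset ι)
    {a b : ι → R} (ha : ∀ i ∈ s, ‖a i‖ ≤ 1) (hb : ∀ i ∈ s, ‖b i‖ ≤ 1) :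
    ‖∏ i ∈ s, a i - ∏ i ∈ s, b i‖ ≤ ∑ i ∈ s, ‖a i - b i‖ := by
  classical
  induction s using Finset.induction_on with
  | empty => simp
  | insert i s hi ih =>
    simp only [forall_mem_insert] at ha hb
    have hprod : ‖∏ j ∈ s, b j‖ ≤ 1 :=
      (Finset.norm_prod_le _ _).trans (prod_le_one (fun _ _ => norm_nonneg _) hb.2)
    rw [prod_insert hi, prod_insert hi, sum_insert hi]
    calc ‖a i * ∏ j ∈ s, a j - b i * ∏ j ∈ s, b j‖
        = ‖(a i - b i) * ∏ j ∈ s, b j + a i * (∏ j ∈ s, a j - ∏ j ∈ s, b j)‖ := by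
          congr 1
          ring
      _ ≤ ‖a i - b i‖ * ‖∏ j ∈ s, b j‖ + ‖a i‖ * ‖∏ j ∈ s, a j - ∏ j ∈ s, b j‖ :=
          (norm_add_le _ _).trans (add_le_add (norm_mul_le _ _) (norm_mul_le _ _))
      _ ≤ ‖a i - b i‖ + ∑ j ∈ s, ‖a j - b j‖ :=
          add_le_add (mul_le_of_le_one_right (norm_nonneg _) hprod)
            ((mul_le_of_le_one_left (norm_nonneg _) ha.1).trans (ih ha.2 hb.2))

lemma abs_natCeil_mul_div_sub_le {N : ℕ} (hN : 0 < N) {z : ℝ} (hz : 0 ≤ z) :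
    |(⌈z * N⌉₊ : ℝ) / N - z| ≤ 1 / N := by
  have hN' : (0 : ℝ) < N := Nat.cast_pos.2 hN
  have hlt := Nat.ceil_lt_add_one (mul_nonneg hz hN'.le)
  rw [show (⌈z * N⌉₊ : ℝ) / N - z = (⌈z * N⌉₊ - z * N) / N by field_simp,
    abs_of_nonneg (div_nonneg (sub_nonneg.2 (Nat.le_ceil _)) hN'.le)]
  gcongr
  linarith

lemma abs_prod_natCeil_mul_div_sub_prod_le {ι : Type*} [Fintype ι] {N : ℕ} (hN : 0 < N)
    {z : ι → ℝ} (hz : ∀ i, z i ∈ Set.Icc (0 : ℝ) 1) :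
    |∏ i, (⌈z i * N⌉₊ : ℝ) / N - ∏ i, z i| ≤ Fintype.card ι / N := by
  have hceil (i : ι) : (⌈z i * N⌉₊ : ℝ) ≤ N := by
    exact_mod_cast Nat.ceil_le.2 (mul_le_of_le_one_left N.cast_nonneg (hz i).2)
  calc |∏ i, (⌈z i * N⌉₊ : ℝ) / N - ∏ i, z i| ≤ ∑ i, |(⌈z i * N⌉₊ : ℝ) / N - z i| := by
        refine norm_prod_sub_prod_le (R := ℝ) _ (fun i _ => ?_) (fun i _ => ?_)
        · rw [Real.norm_of_nonneg (by positivity)]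
          exact div_le_one_of_le₀ (hceil i) N.cast_nonneg
        · rw [Real.norm_of_nonneg (hz i).1]
          exact (hz i).2
    _ ≤ ∑ _i : ι, 1 / (N : ℝ) := sum_le_sum fun i _ => abs_natCeil_mul_div_sub_le hN (hz i).1
    _ = Fintype.card ι / N := by simp [div_eq_mul_inv]

lemma abs_localDisc_le_one {N s : ℕ} (x : Fin N → Fin s → ℝ) {t : Fin s → ℝ}
    (ht : ∀ j, t j ∈ Set.Icc (0 : ℝ) 1) : |localDisc x t| ≤ 1 := by
  have hcard : #{n | ∀ j, x n j < t j} ≤ N := (card_le_univ _).trans_eq (Fintype.card_fin N)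
  exact abs_sub_le_of_nonneg_of_le (by positivity)
    (div_le_one_of_le₀ (by exact_mod_cast hcard) N.cast_nonneg)
    (prod_nonneg fun j _ => (ht j).1) (prod_le_one (fun j _ => (ht j).1) fun j _ => (ht j).2)

variable {s : ℕ} (u : Finset (Fin s)) {z : Fin s → ℝ}

lemma projPoint_mem_Icc (hz : ∀ j, z j ∈ Set.Icc (0 : ℝ) 1) (j : Fin s) :
    projPoint u z j ∈ Set.Icc (0 : ℝ) 1 := by
  rw [projPoint]
  split_ifs
  exacts [hz j, by simp]

lemma prod_projPoint (z : Fin s → ℝ) : ∏ j, projPoint u z j = ∏ i : u, z i := by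
  rw [prod_coe_sort u z]
  simp [projPoint]

lemma korobovP_lt_iff {p : ℕ} [NeZero p] (n : Fin p) (j : Fin s) (t : ℝ) :
    korobovP p s n j < t ↔ ((n : ZMod p) ^ (j.1 + 1)).val < ⌈t * p⌉₊ := by
  have hp : (0 : ℝ) < p := Nat.cast_pos.2 (NeZero.pos p)
  rw [korobovP, ← Nat.cast_pow, Int.fract_div_natCast_eq_div_natCast_mod, div_lt_iff₀ hp,
    ← Nat.cast_pow, ZMod.val_natCast, Nat.lt_ceil]

lemma korobovP_lt_projPoint_iff {p : ℕ} [NeZero p] (n : Fin p) :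
    (∀ j, korobovP p s n j < projPoint u z j) ↔
      ∀ i : u, ((n : ZMod p) ^ (i.1.1 + 1)).val < ⌈z i * p⌉₊ := by
  simp only [Subtype.forall, ← korobovP_lt_iff]
  refine forall_congr' fun j => ?_
  by_cases hj : j ∈ u
  · simp [projPoint, hj]
  · simp [projPoint, hj, korobovP, Int.fract_lt_one]

lemma card_filter_korobovP_lt_projPoint (p : ℕ) [NeZero p] (z : Fin s → ℝ) :
    #{n | ∀ j, korobovP p s n j < projPoint u z j} =
      #{n : ZMod p | ∀ i : u, (n ^ (i.1.1 + 1)).val < ⌈z i * p⌉₊} := by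
  simp only [korobovP_lt_projPoint_iff]
  refine card_nbij' (fun n => (n : ZMod p)) (fun n => ⟨n.val, n.val_lt⟩) ?_ ?_ ?_ ?_
  · exact fun n hn => by simpa using hn
  · exact fun n hn => by simpa using hn
  · exact fun n _ => Fin.ext (ZMod.val_cast_of_lt n.2)
  · exact fun n _ => n.natCast_zmod_val

variable {p : ℕ} [Fact p.Prime]

lemma abs_card_filter_val_pow_lt_div_sub_le {ι : Type*} [Fintype ι] {e : ι → ℕ}
    (he : Function.Injective e) (he0 : ∀ i, (e i : ZMod p) ≠ 0) {M : ℕ} (heM : ∀ i, e i ≤ M)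
    {m : ι → ℕ} (hm : ∀ i, m i ≤ p) :
    |(#{n : ZMod p | ∀ i, (n ^ e i).val < m i} : ℝ) / p - ∏ i, (m i : ℝ) / p| ≤
      M / √p * (2 + Real.log p) ^ Fintype.card ι := by
  have hp : (0 : ℝ) < p := Nat.cast_pos.2 (NeZero.pos p)
  have hψ : (ZMod.stdAddChar : AddChar (ZMod p) ℂ) ≠ 1 := by
    simpa using ZMod.isPrimitive_stdAddChar p one_ne_zero
  have hcount := abs_card_filter_val_lt_sub_le (y := fun (n : ZMod p) i => n ^ e i)
    (B := M * √p) (by positivity)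
    (fun a ha => by simpa using norm_sum_addChar_sum_mul_pow_le hψ he he0 heM ha) hm
  rw [ZMod.card] at hcount
  calc |(#{n : ZMod p | ∀ i, (n ^ e i).val < m i} : ℝ) / p - ∏ i, (m i : ℝ) / p|
      = |(#{n : ZMod p | ∀ i, (n ^ e i).val < m i} : ℝ) - p * ∏ i, (m i : ℝ) / p| / p := by
        rw [← abs_of_pos hp, ← abs_div, abs_of_pos hp, sub_div, mul_div_cancel_left₀ _ hp.ne']
    _ ≤ M * √p * (2 + Real.log p) ^ Fintype.card ι / p := by gcongr
    _ = M / √p * (2 + Real.log p) ^ Fintype.card ι := by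
        nth_rw 3 [← Real.mul_self_sqrt hp.le]
        field_simp

lemma abs_card_filter_korobovP_div_sub_le (hz : ∀ j, z j ∈ Set.Icc (0 : ℝ) 1) {M : ℕ}
    (hM : ∀ j ∈ u, j.1 + 1 ≤ M) (hMp : M < p) :
    |(#{n | ∀ j, korobovP p s n j < projPoint u z j} : ℝ) / p -
      ∏ i : u, (⌈z i * p⌉₊ : ℝ) / p| ≤ M / √p * (2 + Real.log p) ^ #u := by
  rw [card_filter_korobovP_lt_projPoint, ← Fintype.card_coe u]
  refine abs_card_filter_val_pow_lt_div_sub_le (e := fun i : u => i.1.1 + 1)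
    (m := fun i : u => ⌈z i * p⌉₊)
    (fun i j hij => Subtype.ext (Fin.ext (by simpa using hij))) (fun i => ?_)
    (fun i => hM i i.2) (fun i => ?_)
  · rw [Ne, ZMod.natCast_eq_zero_iff]
    exact Nat.not_dvd_of_pos_of_lt (Nat.succ_pos _) ((hM i i.2).trans_lt hMp)
  · exact Nat.ceil_le.2 (mul_le_of_le_one_left p.cast_nonneg (hz i).2)

lemma abs_localDisc_korobovP_projPoint_le (hz : ∀ j, z j ∈ Set.Icc (0 : ℝ) 1) {M : ℕ}
    (hM : ∀ j ∈ u, j.1 + 1 ≤ M) :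
    |localDisc (korobovP p s) (projPoint u z)| ≤ 2 * (M / √p * (2 + Real.log p) ^ #u) := by
  have hp1 : (1 : ℝ) ≤ p := by exact_mod_cast NeZero.one_le
  have hlog : 1 ≤ (2 + Real.log p) ^ #u := one_le_pow₀ (by linarith [Real.log_nonneg hp1])
  have hdiv : (M : ℝ) / p ≤ M / √p * (2 + Real.log p) ^ #u := by
    refine le_trans ?_ (le_mul_of_one_le_right (by positivity) hlog)
    gcongr
    exact Real.sqrt_le_iff.2 ⟨by positivity, le_self_pow₀ hp1 two_ne_zero⟩
  obtain hpM | hMp := le_or_gt p M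
  · have hone : 1 ≤ (M : ℝ) / p := (one_le_div₀ (by positivity)).2 (by exact_mod_cast hpM)
    linarith [abs_localDisc_le_one (korobovP p s) (projPoint_mem_Icc u hz)]
  have hcard : #u ≤ M := by
    simpa using card_le_card_of_injOn (t := range M) Fin.val
      (fun j hj => mem_coe.2 (mem_range.2 (hM j hj))) Fin.val_injective.injOn
  have hround : |∏ i : u, (⌈z i * p⌉₊ : ℝ) / p - ∏ i : u, z i| ≤ M / p := by
    refine (abs_prod_natCeil_mul_div_sub_prod_le (NeZero.pos p) fun i : u => hz i).trans ?_
    rw [Fintype.card_coe]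
    gcongr
  rw [localDisc, prod_projPoint, two_mul]
  exact (abs_sub_le _ _ _).trans
    (add_le_add (abs_card_filter_korobovP_div_sub_le u hz hM hMp) (hround.trans hdiv))

end KorobovDiscrepancy

section Weights

lemma mul_le_tsum_of_antitone {g : ℕ → ℝ} (hg0 : ∀ j, 0 ≤ g j) (hg : Antitone g)
    (hsum : Summable g) (k : ℕ) : (k + 1 : ℕ) * g k ≤ ∑' j, g j :=
  calc (k + 1 : ℕ) * g k = ∑ _j ∈ range (k + 1), g k := by simp
    _ ≤ ∑ j ∈ range (k + 1), g j :=
        sum_le_sum fun _ hj => hg (Nat.le_of_lt_succ (mem_range.1 hj))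
    _ ≤ ∑' j, g j := hsum.sum_le_tsum _ fun j _ => hg0 j

lemma prod_one_add_mul_le {g : ℕ → ℝ} (hg0 : ∀ j, 0 ≤ g j) (hsum : Summable g) {L : ℝ}
    (hL : 1 ≤ L) (J s : ℕ) :
    ∏ j ∈ range s, (1 + g j * L) ≤
      ((1 + ∑' j, g j) * L) ^ J * Real.exp (L * ∑' j, g (j + J)) := by
  have hterm (j : ℕ) : 0 ≤ g j * L := mul_nonneg (hg0 j) (zero_le_one.trans hL)
  have hfactor (j : ℕ) : 1 ≤ 1 + g j * L := le_add_of_nonneg_right (hterm j)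
  have hhead : ∏ j ∈ range J, (1 + g j * L) ≤ ((1 + ∑' j, g j) * L) ^ J := by
    rw [← card_range J, ← prod_const, card_range]
    refine prod_le_prod (fun j _ => zero_le_one.trans (hfactor j)) fun j _ => ?_
    rw [one_add_mul]
    exact add_le_add hL
      (mul_le_mul_of_nonneg_right (hsum.le_tsum j fun i _ => hg0 i) (zero_le_one.trans hL))
  have htail : ∏ j ∈ range s, (1 + g (J + j) * L) ≤ Real.exp (L * ∑' j, g (j + J)) := by
    have hexp (j : ℕ) : 1 + g (J + j) * L ≤ Real.exp (L * g (j + J)) := by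
      rw [add_comm, add_comm J, mul_comm]
      exact Real.add_one_le_exp _
    refine (prod_le_prod (fun j _ => zero_le_one.trans (hfactor _)) fun j _ => hexp j).trans ?_
    rw [← Real.exp_sum, ← mul_sum]
    gcongr
    exact ((summable_nat_add_iff J).2 hsum).sum_le_tsum _ fun j _ => hg0 _
  calc ∏ j ∈ range s, (1 + g j * L) ≤ ∏ j ∈ range (J + s), (1 + g j * L) :=
        prod_le_prod_of_subset_of_one_le (range_subset_range.2 (Nat.le_add_left s J))
          (fun j _ => zero_le_one.trans (hfactor j)) fun j _ _ => hfactor j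
    _ = (∏ j ∈ range J, (1 + g j * L)) * ∏ j ∈ range s, (1 + g (J + j) * L) :=
        prod_range_add _ _ _
    _ ≤ _ := mul_le_mul hhead htail (prod_nonneg fun j _ => zero_le_one.trans (hfactor _))
        ((prod_nonneg fun j _ => zero_le_one.trans (hfactor j)).trans hhead)

lemma two_add_log_le_mul_rpow {x η : ℝ} (hx : 1 ≤ x) (hη : 0 < η) :
    2 + Real.log x ≤ (2 + 1 / η) * x ^ η := by
  have hlog := Real.log_le_rpow_div (zero_le_one.trans hx) hη
  have hpow : 1 ≤ x ^ η := Real.one_le_rpow hx hη.le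
  calc 2 + Real.log x ≤ 2 * x ^ η + x ^ η / η := by linarith
    _ = (2 + 1 / η) * x ^ η := by ring

lemma exists_mul_prod_one_add_mul_log_le {g : ℕ → ℝ} (hg0 : ∀ j, 0 ≤ g j) (hsum : Summable g)
    {δ : ℝ} (hδ : 0 < δ) :
    ∃ C : ℝ, 0 < C ∧ ∀ (s : ℕ) (x : ℝ), 1 ≤ x →
      (2 + Real.log x) * ∏ j ∈ range s, (1 + g j * (2 + Real.log x)) ≤ C * x ^ δ := by
  obtain ⟨J, hJ⟩ : ∃ J, ∑' j, g (j + J) ≤ δ / 2 :=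
    ((tendsto_sum_nat_add g).eventually (ge_mem_nhds (half_pos hδ))).exists
  have hΓ : 0 ≤ ∑' j, g j := tsum_nonneg hg0
  set Γ := ∑' j, g j
  set η := δ / 2 / (J + 1 : ℕ) with η_def
  have hη : 0 < η := by positivity
  refine ⟨(1 + Γ) ^ J * Real.exp δ * (2 + 1 / η) ^ (J + 1), by positivity, fun s x hx => ?_⟩
  have hx0 : 0 < x := zero_lt_one.trans_le hx
  have hlog : 0 ≤ Real.log x := Real.log_nonneg hx
  have hexp : Real.exp ((2 + Real.log x) * (δ / 2)) = Real.exp δ * x ^ (δ / 2) := by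
    rw [Real.rpow_def_of_pos hx0, ← Real.exp_add]
    ring_nf
  have hpow : (x ^ η) ^ (J + 1) = x ^ (δ / 2) := by
    rw [← Real.rpow_mul_natCast hx0.le, η_def, div_mul_cancel₀ _ (by positivity)]
  have hlogpow := two_add_log_le_mul_rpow hx hη
  have hprod := prod_one_add_mul_le hg0 hsum (L := 2 + Real.log x) (by linarith) J s
  set L := 2 + Real.log x
  have hL : 0 ≤ L := by positivity
  calc L * ∏ j ∈ range s, (1 + g j * L)
      ≤ L * (((1 + Γ) * L) ^ J * Real.exp (L * (δ / 2))) := by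
        refine mul_le_mul_of_nonneg_left (hprod.trans ?_) hL
        gcongr
    _ = (1 + Γ) ^ J * Real.exp δ * x ^ (δ / 2) * L ^ (J + 1) := by
        rw [hexp, mul_pow]
        ring
    _ ≤ (1 + Γ) ^ J * Real.exp δ * x ^ (δ / 2) * ((2 + 1 / η) * x ^ η) ^ (J + 1) := by gcongr
    _ = (1 + Γ) ^ J * Real.exp δ * (2 + 1 / η) ^ (J + 1) * x ^ δ := by
        rw [mul_pow, hpow, ← add_halves δ, Real.rpow_add hx0, add_halves]
        ring

variable {γ : ℕ → ℝ}

lemma exists_mul_le_of_succ_le (hγ : ∀ j, 1 ≤ j → 0 ≤ γ j)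
    (hdec : ∀ j, 1 ≤ j → γ (j + 1) ≤ γ j) (hsum : Summable fun j => γ (j + 1)) :
    ∃ B : ℝ, ∀ j : ℕ, 1 ≤ j → j * γ j ≤ B := by
  refine ⟨∑' j, γ (j + 1), fun j hj => ?_⟩
  obtain ⟨k, rfl⟩ := Nat.exists_eq_add_of_le' hj
  exact mul_le_tsum_of_antitone (fun j => hγ _ (Nat.le_add_left 1 j))
    (antitone_nat_of_succ_le fun j => hdec _ (Nat.le_add_left 1 j)) hsum k

variable {s : ℕ} {u : Finset (Fin s)}

lemma weightOf_nonneg (hγ : ∀ j, 1 ≤ j → 0 ≤ γ j) (u : Finset (Fin s)) : 0 ≤ weightOf γ u :=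
  prod_nonneg fun _ _ => hγ _ (Nat.le_add_left 1 _)

lemma weightOf_mul_pow_card_le (hγ : ∀ j, 1 ≤ j → 0 ≤ γ j) {L : ℝ} (hL : 0 ≤ L) {i : Fin s}
    (hi : i ∈ u) :
    weightOf γ u * L ^ #u ≤ γ (i + 1) * L * ∏ j ∈ range s, (1 + γ (j + 1) * L) := by
  have hterm (j : ℕ) : 0 ≤ γ (j + 1) * L := mul_nonneg (hγ _ (Nat.le_add_left 1 j)) hL
  have hfactor (j : ℕ) : 1 ≤ 1 + γ (j + 1) * L := le_add_of_nonneg_right (hterm j)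
  rw [weightOf, ← prod_const, ← prod_mul_distrib, ← mul_prod_erase u _ hi,
    ← Fin.prod_univ_eq_prod_range fun j => 1 + γ (j + 1) * L]
  refine mul_le_mul_of_nonneg_left ?_ (hterm i)
  calc ∏ j ∈ u.erase i, γ (j + 1) * L ≤ ∏ j ∈ u.erase i, (1 + γ (j + 1) * L) :=
        prod_le_prod (fun j _ => hterm j) fun j _ => le_add_of_nonneg_left zero_le_one
    _ ≤ ∏ j : Fin s, (1 + γ (j + 1) * L) :=
        prod_le_prod_of_subset_of_one_le (subset_univ _)
          (fun j _ => zero_le_one.trans (hfactor j)) fun j _ _ => hfactor j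

lemma weightOf_mul_abs_localDisc_korobovP_le (hγ : ∀ j, 1 ≤ j → 0 ≤ γ j) {B : ℝ}
    (hB : ∀ j, 1 ≤ j → j * γ j ≤ B) {p : ℕ} [Fact p.Prime] (hu : u.Nonempty) {z : Fin s → ℝ}
    (hz : ∀ j, z j ∈ Set.Icc (0 : ℝ) 1) :
    weightOf γ u * |localDisc (korobovP p s) (projPoint u z)| ≤
      2 * B / √p * ((2 + Real.log p) * ∏ j ∈ range s, (1 + γ (j + 1) * (2 + Real.log p))) := by
  have hL : 0 ≤ 2 + Real.log p := by positivity
  have hdisc := abs_localDisc_korobovP_projPoint_le (p := p) u hz (M := u.max' hu + 1)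
    fun j hj => Nat.succ_le_succ (u.le_max' j hj)
  have hweight := weightOf_mul_pow_card_le hγ hL (u.max'_mem hu)
  set i : ℕ := (u.max' hu).1
  set L := 2 + Real.log p
  have hprod : 0 ≤ L * ∏ j ∈ range s, (1 + γ (j + 1) * L) :=
    mul_nonneg hL (prod_nonneg fun j _ =>
      add_nonneg zero_le_one (mul_nonneg (hγ _ (Nat.le_add_left 1 j)) hL))
  calc weightOf γ u * |localDisc (korobovP p s) (projPoint u z)|
      ≤ weightOf γ u * (2 * ((i + 1 : ℕ) / √p * L ^ #u)) :=
        mul_le_mul_of_nonneg_left hdisc (weightOf_nonneg hγ u)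
    _ = 2 * (i + 1 : ℕ) / √p * (weightOf γ u * L ^ #u) := by ring
    _ ≤ 2 * (i + 1 : ℕ) / √p * (γ (i + 1) * L * ∏ j ∈ range s, (1 + γ (j + 1) * L)) := by gcongr
    _ = 2 * ((i + 1 : ℕ) * γ (i + 1)) / √p * (L * ∏ j ∈ range s, (1 + γ (j + 1) * L)) := by ring
    _ ≤ 2 * B / √p * (L * ∏ j ∈ range s, (1 + γ (j + 1) * L)) := by
        gcongr
        exact hB _ (Nat.le_add_left 1 i)

end Weights

theorem wStarDisc_korobovP_le_general (γ : ℕ → ℝ) (hγ : ∀ j, 1 ≤ j → 0 ≤ γ j)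
    (hbdd : ∃ B : ℝ, ∀ j : ℕ, 1 ≤ j → j * γ j ≤ B)
    (hsum : Summable fun j => γ (j + 1)) (δ : ℝ) (hδ : 0 < δ) :
    ∃ C : ℝ, 0 < C ∧ ∀ p s : ℕ, p.Prime → 1 ≤ s →
      wStarDisc γ (korobovP p s) ≤ C * (p : ℝ) ^ (-(1 / 2 - δ) : ℝ) := by
  obtain ⟨B, hB⟩ := hbdd
  have hB0 : 0 ≤ B := (mul_nonneg (Nat.cast_nonneg 1) (hγ 1 le_rfl)).trans (hB 1 le_rfl)
  obtain ⟨C, hC, hprod⟩ :=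
    exists_mul_prod_one_add_mul_log_le (fun j => hγ _ (Nat.le_add_left 1 j)) hsum hδ
  refine ⟨2 * B * C + 1, by positivity, fun p s hp _ => Real.sSup_le ?_ (by positivity)⟩
  rintro _ ⟨z, hz, u, hu, rfl⟩
  have := Fact.mk hp
  have hp0 : (0 : ℝ) < p := Nat.cast_pos.2 hp.pos
  calc weightOf γ u * |localDisc (korobovP p s) (projPoint u z)|
      ≤ 2 * B / √p * ((2 + Real.log p) * ∏ j ∈ range s, (1 + γ (j + 1) * (2 + Real.log p))) :=
        weightOf_mul_abs_localDisc_korobovP_le hγ hB hu hz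
    _ ≤ 2 * B / √p * (C * p ^ δ) :=
        mul_le_mul_of_nonneg_left (hprod s p (by exact_mod_cast hp.one_le)) (by positivity)
    _ = 2 * B * C * (p : ℝ) ^ (-(1 / 2 - δ)) := by
        rw [neg_sub, Real.rpow_sub hp0, ← Real.sqrt_eq_rpow]
        ring
    _ ≤ (2 * B * C + 1) * (p : ℝ) ^ (-(1 / 2 - δ)) := by
        gcongr
        exact le_add_of_nonneg_right zero_le_one

/-- for non-increasing, summable, nonnegative weights and any `δ > 0`,
`D*_γ(P_{p,s}) ≤ C p^{−(1/2−δ)}` with `C` independent of the prime `p` and of `s`. -/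
theorem wStarDisc_korobovP_le (γ : ℕ → ℝ) (hγ : ∀ j, 1 ≤ j → 0 ≤ γ j)
    (hdec : ∀ j, 1 ≤ j → γ (j + 1) ≤ γ j)
    (hsum : Summable fun j => γ (j + 1)) (δ : ℝ) (hδ : 0 < δ) :
    ∃ C : ℝ, 0 < C ∧ ∀ p s : ℕ, p.Prime → 1 ≤ s →
      wStarDisc γ (korobovP p s) ≤ C * (p : ℝ) ^ (-(1 / 2 - δ) : ℝ) :=
  wStarDisc_korobovP_le_general γ hγ (exists_mul_le_of_succ_le hγ hdec hsum) hsum δ hδ
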